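/- arXiv:0906.3943 — 20 statements merged into one kernel-verified Lean document; each statement's English description precedes it below -/
import Mathlib

section
/- Let G be the presented group with generators x₁,…,x₁₁ and relators x₁₀x₁x₁₀⁻¹x₂⁻¹, x₆x₂x₆⁻¹x₃⁻¹, x₂x₄x₂⁻¹x₃⁻¹, x₉x₄x₉⁻¹x₅⁻¹, x₃x₅x₃⁻¹x₆⁻¹, x₄x₇x₄⁻¹x₆⁻¹, x₁₁x₈x₁₁⁻¹x₇⁻¹, x₅x₈x₅⁻¹x₉⁻¹, x₈x₁₀x₈⁻¹x₉⁻¹, x₁x₁₀x₁⁻¹x₁₁⁻¹ (a Wirtinger presentation of the knot group of 11a_5). Then the assignment x₁ ↦ y₁, x₂ ↦ y₁y₂y₃⁻¹, x₃ ↦ y₃y₃y₁⁻¹y₄y₁⁻¹, x₄ ↦ y₃, x₅ ↦ y₃, x₆ ↦ y₁y₂y₂y₃⁻¹y₃⁻¹, x₇ ↦ y₁y₂y₃⁻¹, x₈ ↦ y₃, x₉ ↦ y₃, x₁₀ ↦ y₃, x₁₁ ↦ y₁y₃y₁⁻¹ sends every relator of G to the identity of G(4₁), hence induces a group homomorphism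 G → G(4₁), and this homomorphism is surjective. -/
/-!
Write `a, b, c, d` for `y₁, y₂, y₃, y₄`. The second relation of the figure-eight group gives
`b = a⁻¹ c a`; eliminating `b` and `d` leaves the two-generator presentation with the single
relation `a c a⁻¹ c a = c a c⁻¹ a c`, and moreover `d = c⁻¹ a c` (the redundant fourth Wirtinger
relation). In terms of `a` and `c`, the prescribed images become conjugates of `a` or `c`:
`x₂, x₇ ↦ c a c⁻¹`, `x₃ ↦ c a c a⁻¹ c⁻¹`, `x₆ ↦ c² a c⁻²`. Every relator of the source then maps
either to a freely trivial word or to a conjugate of the two-bridge relation or its inverse.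
Surjectivity holds because the images of `x₁` and `x₄` are `a` and `c`, which generate.
-/

/-!
Statement 0: the assignment given in the paper sends every relator of the
Wirtinger presentation of the knot group of `11a_5` to the identity of the
figure-eight knot group G(4_1), hence induces a group homomorphism, and this homomorphism
is surjective.

Generators are indexed by `Fin`, with `xⱼ` corresponding to index `j - 1`
(and similarly `yⱼ` to `j - 1`).
-/

namespace Stmt0

/-- Relators of the figure-eight knot group G(4_1). -/
def targetRels : Set (FreeGroup (Fin 4)) :=
  {FreeGroup.of 3 * FreeGroup.of 1 * (FreeGroup.of 3)⁻¹ * (FreeGroup.of 0)⁻¹,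
   FreeGroup.of 0 * FreeGroup.of 1 * (FreeGroup.of 0)⁻¹ * (FreeGroup.of 2)⁻¹,
   FreeGroup.of 1 * FreeGroup.of 3 * (FreeGroup.of 1)⁻¹ * (FreeGroup.of 2)⁻¹}

/-- The figure-eight knot group G(4_1), as a presented group. -/
abbrev TargetGroup : Type := PresentedGroup targetRels

/-- The images of the generators `y₁, …, y_4` in the target group. -/
def y : Fin 4 → TargetGroup := PresentedGroup.of

/-- Relators of the Wirtinger presentation of the knot group of `11a_5`. -/
def sourceRels : Set (FreeGroup (Fin 11)) :=
  {FreeGroup.of 9 * FreeGroup.of 0 * (FreeGroup.of 9)⁻¹ * (FreeGroup.of 1)⁻¹,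
   FreeGroup.of 5 * FreeGroup.of 1 * (FreeGroup.of 5)⁻¹ * (FreeGroup.of 2)⁻¹,
   FreeGroup.of 1 * FreeGroup.of 3 * (FreeGroup.of 1)⁻¹ * (FreeGroup.of 2)⁻¹,
   FreeGroup.of 8 * FreeGroup.of 3 * (FreeGroup.of 8)⁻¹ * (FreeGroup.of 4)⁻¹,
   FreeGroup.of 2 * FreeGroup.of 4 * (FreeGroup.of 2)⁻¹ * (FreeGroup.of 5)⁻¹,
   FreeGroup.of 3 * FreeGroup.of 6 * (FreeGroup.of 3)⁻¹ * (FreeGroup.of 5)⁻¹,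
   FreeGroup.of 10 * FreeGroup.of 7 * (FreeGroup.of 10)⁻¹ * (FreeGroup.of 6)⁻¹,
   FreeGroup.of 4 * FreeGroup.of 7 * (FreeGroup.of 4)⁻¹ * (FreeGroup.of 8)⁻¹,
   FreeGroup.of 7 * FreeGroup.of 9 * (FreeGroup.of 7)⁻¹ * (FreeGroup.of 8)⁻¹,
   FreeGroup.of 0 * FreeGroup.of 9 * (FreeGroup.of 0)⁻¹ * (FreeGroup.of 10)⁻¹}

/-- The knot group of `11a_5`, as a presented group. -/
abbrev SourceGroup : Type := PresentedGroup sourceRels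

/-- The prescribed images of the generators `x₁, …, x₁₁`. -/
def f : Fin 11 → TargetGroup :=
  ![y 0,
   y 0 * y 1 * (y 2)⁻¹,
   y 2 * y 2 * (y 0)⁻¹ * y 3 * (y 0)⁻¹,
   y 2,
   y 2,
   y 0 * y 1 * y 1 * (y 2)⁻¹ * (y 2)⁻¹,
   y 0 * y 1 * (y 2)⁻¹,
   y 2,
   y 2,
   y 2,
   y 0 * y 2 * (y 0)⁻¹]

end Stmt0

namespace Stmt0

lemma y_one : y 1 = (y 0)⁻¹ * y 2 * y 0 := by
  have h : y 0 * y 1 * (y 0)⁻¹ * (y 2)⁻¹ = 1 :=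
    PresentedGroup.one_of_mem (rels := targetRels) (by simp [targetRels])
  rw [mul_inv_eq_one] at h
  rw [← h]
  group

lemma y_three_conj : y 3 = (y 1)⁻¹ * y 2 * y 1 := by
  have h : y 1 * y 3 * (y 1)⁻¹ * (y 2)⁻¹ = 1 :=
    PresentedGroup.one_of_mem (rels := targetRels) (by simp [targetRels])
  rw [mul_inv_eq_one] at h
  rw [← h]
  group

/-- The defining relation of the figure-eight knot group as a two-bridge knot group on the
meridians `y₁` and `y₃`. -/
lemma two_bridge :
    y 0 * y 2 * (y 0)⁻¹ * y 2 * y 0 = y 2 * y 0 * (y 2)⁻¹ * y 0 * y 2 := by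
  have h : y 3 * y 1 * (y 3)⁻¹ * (y 0)⁻¹ = 1 :=
    PresentedGroup.one_of_mem (rels := targetRels) (by simp [targetRels])
  rw [y_three_conj, y_one] at h
  generalize y 0 = a at *
  generalize y 2 = c at *
  rw [mul_inv_eq_one] at h
  have h' : c * (a⁻¹ * c * a) * c⁻¹ = (a⁻¹ * c * a) * a * (a⁻¹ * c * a)⁻¹ := by
    generalize a⁻¹ * c * a = b at *
    rw [← h]
    group
  calc a * c * a⁻¹ * c * a = a * (c * (a⁻¹ * c * a) * c⁻¹) * c := by group
    _ = c * a * c⁻¹ * a * c := by rw [h']; group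

/-- The fourth Wirtinger relation of the figure-eight knot, a consequence of the other three. -/
lemma y_three : y 3 = (y 2)⁻¹ * y 0 * y 2 := by
  have h : y 3 = (y 0)⁻¹ * (y 2)⁻¹ * (y 0 * y 2 * (y 0)⁻¹ * y 2 * y 0) := by
    rw [y_three_conj, y_one]
    group
  rw [h, two_bridge]
  group

/-- The image of `x₂` and of `x₇` as a conjugate of `y₁`. -/
lemma image_two : y 0 * y 1 * (y 2)⁻¹ = y 2 * y 0 * (y 2)⁻¹ := by
  rw [y_one]
  group

/-- The image of `x₆` as a conjugate of `y₁`. -/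
lemma image_six :
    y 0 * y 1 * y 1 * (y 2)⁻¹ * (y 2)⁻¹ = y 2 * y 2 * y 0 * (y 2)⁻¹ * (y 2)⁻¹ := by
  rw [y_one]
  group

/-- The image of `x₃` as a conjugate of `y₃`. -/
lemma image_three :
    y 2 * y 2 * (y 0)⁻¹ * y 3 * (y 0)⁻¹ = y 2 * y 0 * y 2 * (y 0)⁻¹ * (y 2)⁻¹ := by
  rw [y_three]
  have tb := two_bridge
  generalize y 0 = a at *
  generalize y 2 = c at *
  -- The quotient of the two sides is a conjugate of the quotient of the two-bridge relation.
  rw [← mul_inv_eq_one]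
  calc _ = c * (c * a⁻¹ * c⁻¹) * ((a * c * a⁻¹ * c * a) * (c * a * c⁻¹ * a * c)⁻¹) *
        (c * a⁻¹ * c⁻¹)⁻¹ * c⁻¹ := by group
    _ = 1 := by rw [tb]; group

/-- The map on generators with `y₂` and `y₄` eliminated. -/
lemma f_eq : f = ![y 0,
   y 2 * y 0 * (y 2)⁻¹,
   y 2 * y 0 * y 2 * (y 0)⁻¹ * (y 2)⁻¹,
   y 2,
   y 2,
   y 2 * y 2 * y 0 * (y 2)⁻¹ * (y 2)⁻¹,
   y 2 * y 0 * (y 2)⁻¹,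
   y 2,
   y 2,
   y 2,
   y 0 * y 2 * (y 0)⁻¹] := by
  rw [f, image_two, image_three, image_six]

lemma lift_f_eq_one : ∀ r ∈ sourceRels, FreeGroup.lift f r = 1 := by
  have tb := two_bridge
  rw [f_eq]
  generalize y 0 = a at *
  generalize y 2 = c at *
  intro r hr
  simp only [sourceRels, Set.mem_insert_iff, Set.mem_singleton_iff] at hr
  rcases hr with rfl | rfl | rfl | rfl | rfl | rfl | rfl | rfl | rfl | rfl <;>
    simp only [map_mul, map_inv, FreeGroup.lift_apply_of] <;>
    simp only [Matrix.cons_val]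
  · group
  · calc _ = c * (c * a * c⁻¹ * a * c) * (a * c * a⁻¹ * c * a)⁻¹ * c⁻¹ := by group
      _ = 1 := by rw [tb]; group
  · group
  · group
  · calc _ = c * (a * c * a⁻¹ * c * a) * (c * a * c⁻¹ * a * c)⁻¹ * c⁻¹ := by group
      _ = 1 := by rw [tb]; group
  · group
  · calc _ = (a * c * a⁻¹ * c * a) * (c * a * c⁻¹ * a * c)⁻¹ := by group
      _ = 1 := by rw [tb]; group
  · group
  · group
  · group

lemma surjective_of_map_of (φ : SourceGroup →* TargetGroup)
    (hφ : ∀ j : Fin 11, φ (PresentedGroup.of j) = f j) : Function.Surjective φ := by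
  rw [← MonoidHom.range_eq_top, eq_top_iff, ← PresentedGroup.closure_range_of targetRels,
    Subgroup.closure_le]
  have h0 : y 0 ∈ φ.range := ⟨PresentedGroup.of 0, hφ 0⟩
  have h2 : y 2 ∈ φ.range := ⟨PresentedGroup.of 3, hφ 3⟩
  have h1 : y 1 ∈ φ.range := by
    rw [y_one]
    exact mul_mem (mul_mem (inv_mem h0) h2) h0
  have h3 : y 3 ∈ φ.range := by
    rw [y_three]
    exact mul_mem (mul_mem (inv_mem h2) h0) h2
  rintro _ ⟨i, rfl⟩
  fin_cases i
  exacts [h0, h1, h2, h3]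

end Stmt0

open Stmt0 in
theorem stmt0 :
    (∀ r ∈ sourceRels, FreeGroup.lift f r = 1) ∧
    ∃ φ : SourceGroup →* TargetGroup,
      (∀ j : Fin 11, φ (PresentedGroup.of j) = f j) ∧ Function.Surjective φ := by
  refine ⟨lift_f_eq_one, PresentedGroup.toGroup lift_f_eq_one, ?_, ?_⟩
  · intro j
    exact PresentedGroup.toGroup.of lift_f_eq_one
  · exact surjective_of_map_of _ fun j => PresentedGroup.toGroup.of lift_f_eq_one
end

section
/- Let G be the presented group with generators x₁,…,x₁₁ and relators x₈x₂x₈⁻¹x₁⁻¹, x₄x₃x₄⁻¹x₂⁻¹, x₁₁x₃x₁₁⁻¹x₄⁻¹, x₆x₅x₆⁻¹x₄⁻¹, x₉x₅x₉⁻¹x₆⁻¹, x₁₀x₇x₁₀⁻¹x₆⁻¹, x₁x₈x₁⁻¹x₇⁻¹, x₇x₉x₇⁻¹x₈⁻¹, x₅x₉x₅⁻¹x₁₀⁻¹, x₂x₁₁x₂⁻¹x₁₀⁻¹ (a Wirtinger presentation of the knot group of 11a_6). Then the assignment x₁ ↦ y₁, x₂ ↦ y₁, x₃ ↦ y₄,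 x₄ ↦ y₃, x₅ ↦ y₂y₁y₂⁻¹, x₆ ↦ y₁y₂y₃⁻¹, x₇ ↦ y₁, x₈ ↦ y₁, x₉ ↦ y₁, x₁₀ ↦ y₃, x₁₁ ↦ y₂ sends every relator of G to the identity of G(4₁), hence induces a group homomorphism G → G(4₁), and this homomorphism is surjective. -/
/-!
Write `u ▹ v` for `u v u⁻¹`. The relators of `G(4₁)` say `y₄ ▹ y₂ = y₁`, `y₁ ▹ y₂ = y₃` and
`y₂ ▹ y₄ = y₃`; together they imply the relation `y₃ ▹ y₄ = y₁` of the remaining crossing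
(`y_rel₄`). They also give `y₂ ▹ y₁ = y₃ ▹ y₂` (the image of `x₅`) and
`y₁ y₂ y₃⁻¹ = y₃ ▹ y₁` (the image of `x₆`). With these identities each of the ten relators
maps to `1` (`lift_f_eq_one`), so the assignment induces a homomorphism. It is surjective since
`y₁, y₂, y₃, y₄` are the images of `x₁, x₁₁, x₄, x₃`.
-/

/-!
Statement 1: the assignment given in the paper sends every relator of the
Wirtinger presentation of the knot group of `11a_6` to the identity of the
figure-eight knot group G(4_1), hence induces a group homomorphism, and this homomorphism
is surjective.

Generators are indexed by `Fin`, with `xⱼ` corresponding to index `j - 1`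
(and similarly `yⱼ` to `j - 1`).
-/

namespace Stmt1

/-- Relators of the figure-eight knot group G(4_1). -/
def targetRels : Set (FreeGroup (Fin 4)) :=
  {FreeGroup.of 3 * FreeGroup.of 1 * (FreeGroup.of 3)⁻¹ * (FreeGroup.of 0)⁻¹,
   FreeGroup.of 0 * FreeGroup.of 1 * (FreeGroup.of 0)⁻¹ * (FreeGroup.of 2)⁻¹,
   FreeGroup.of 1 * FreeGroup.of 3 * (FreeGroup.of 1)⁻¹ * (FreeGroup.of 2)⁻¹}

/-- The figure-eight knot group G(4_1), as a presented group. -/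
abbrev TargetGroup : Type := PresentedGroup targetRels

/-- The images of the generators `y₁, …, y_4` in the target group. -/
def y : Fin 4 → TargetGroup := PresentedGroup.of

/-- Relators of the Wirtinger presentation of the knot group of `11a_6`. -/
def sourceRels : Set (FreeGroup (Fin 11)) :=
  {FreeGroup.of 7 * FreeGroup.of 1 * (FreeGroup.of 7)⁻¹ * (FreeGroup.of 0)⁻¹,
   FreeGroup.of 3 * FreeGroup.of 2 * (FreeGroup.of 3)⁻¹ * (FreeGroup.of 1)⁻¹,
   FreeGroup.of 10 * FreeGroup.of 2 * (FreeGroup.of 10)⁻¹ * (FreeGroup.of 3)⁻¹,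
   FreeGroup.of 5 * FreeGroup.of 4 * (FreeGroup.of 5)⁻¹ * (FreeGroup.of 3)⁻¹,
   FreeGroup.of 8 * FreeGroup.of 4 * (FreeGroup.of 8)⁻¹ * (FreeGroup.of 5)⁻¹,
   FreeGroup.of 9 * FreeGroup.of 6 * (FreeGroup.of 9)⁻¹ * (FreeGroup.of 5)⁻¹,
   FreeGroup.of 0 * FreeGroup.of 7 * (FreeGroup.of 0)⁻¹ * (FreeGroup.of 6)⁻¹,
   FreeGroup.of 6 * FreeGroup.of 8 * (FreeGroup.of 6)⁻¹ * (FreeGroup.of 7)⁻¹,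
   FreeGroup.of 4 * FreeGroup.of 8 * (FreeGroup.of 4)⁻¹ * (FreeGroup.of 9)⁻¹,
   FreeGroup.of 1 * FreeGroup.of 10 * (FreeGroup.of 1)⁻¹ * (FreeGroup.of 9)⁻¹}

/-- The knot group of `11a_6`, as a presented group. -/
abbrev SourceGroup : Type := PresentedGroup sourceRels

/-- The prescribed images of the generators `x₁, …, x₁₁`. -/
def f : Fin 11 → TargetGroup :=
  ![y 0,
   y 0,
   y 3,
   y 2,
   y 1 * y 0 * (y 1)⁻¹,
   y 0 * y 1 * (y 2)⁻¹,
   y 0,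
   y 0,
   y 0,
   y 2,
   y 1]

end Stmt1

namespace Stmt1

/-- A word equation `u v u⁻¹ = w` in the form of a Wirtinger relator. -/
lemma relator_eq_one {H : Type*} [Group H] {u v w : H} (h : u * v * u⁻¹ = w) :
    u * v * u⁻¹ * w⁻¹ = 1 := by
  rw [h, mul_inv_cancel]

lemma y_rel₁ : y 3 * y 1 * (y 3)⁻¹ = y 0 :=
  mul_inv_eq_one.mp (PresentedGroup.one_of_mem (rels := targetRels) (by simp [targetRels]))

lemma y_rel₂ : y 0 * y 1 * (y 0)⁻¹ = y 2 :=
  mul_inv_eq_one.mp (PresentedGroup.one_of_mem (rels := targetRels) (by simp [targetRels]))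

lemma y_rel₃ : y 1 * y 3 * (y 1)⁻¹ = y 2 :=
  mul_inv_eq_one.mp (PresentedGroup.one_of_mem (rels := targetRels) (by simp [targetRels]))

/-- The Wirtinger relation of the fourth crossing of the figure-eight diagram, which is a
consequence of the other three. -/
lemma y_rel₄ : y 2 * y 3 * (y 2)⁻¹ = y 0 := by
  have h : y 0 * y 2 = y 2 * y 3 := by
    calc y 0 * y 2 = y 0 * (y 1 * y 3 * (y 1)⁻¹) := by rw [y_rel₃]
      _ = y 0 * y 1 * (y 0)⁻¹ * (y 0 * y 3 * (y 1)⁻¹) := by group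
      _ = y 2 * (y 3 * y 1 * (y 3)⁻¹ * y 3 * (y 1)⁻¹) := by rw [y_rel₂, y_rel₁]
      _ = y 2 * y 3 := by group
  rw [← h, mul_inv_cancel_right]

/-- A second expression for the image of `x₅`. -/
lemma y_conj₅ : y 1 * y 0 * (y 1)⁻¹ = y 2 * y 1 * (y 2)⁻¹ := by
  rw [← y_rel₁, ← y_rel₃]
  group

/-- A second expression for the image of `x₆`, displaying it as a conjugate of `y₁`. -/
lemma y_conj₆ : y 0 * y 1 * (y 2)⁻¹ = y 2 * y 0 * (y 2)⁻¹ := by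
  rw [← y_rel₂]
  group

lemma lift_f_eq_one : ∀ r ∈ sourceRels, FreeGroup.lift f r = 1 := by
  intro r hr
  simp only [sourceRels, Set.mem_insert_iff, Set.mem_singleton_iff] at hr
  rcases hr with rfl | rfl | rfl | rfl | rfl | rfl | rfl | rfl | rfl | rfl <;>
    simp only [map_mul, map_inv, FreeGroup.lift_apply_of] <;>
    apply relator_eq_one
  · exact mul_inv_cancel_right (y 0) (y 0)
  · exact y_rel₄
  · exact y_rel₃
  · change y 0 * y 1 * (y 2)⁻¹ * (y 1 * y 0 * (y 1)⁻¹) * (y 0 * y 1 * (y 2)⁻¹)⁻¹ = y 2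
    rw [y_conj₅, y_conj₆]
    calc _ = y 2 * (y 0 * y 1 * (y 0)⁻¹) * (y 2)⁻¹ := by group
      _ = y 2 := by rw [y_rel₂, mul_inv_cancel_right]
  · change y 0 * (y 1 * y 0 * (y 1)⁻¹) * (y 0)⁻¹ = y 0 * y 1 * (y 2)⁻¹
    rw [← y_rel₂]
    group
  · exact y_conj₆.symm
  · exact mul_inv_cancel_right (y 0) (y 0)
  · exact mul_inv_cancel_right (y 0) (y 0)
  · change y 1 * y 0 * (y 1)⁻¹ * y 0 * (y 1 * y 0 * (y 1)⁻¹)⁻¹ = y 2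
    -- Conjugating `y₁` by `y₃ y₂ y₃⁻¹` passes through `y₄` and then `y₃`.
    rw [y_conj₅]
    calc _ = y 2 * (y 1 * ((y 2)⁻¹ * y 0 * y 2) * (y 1)⁻¹) * (y 2)⁻¹ := by group
      _ = y 2 * (y 1 * ((y 2)⁻¹ * (y 2 * y 3 * (y 2)⁻¹) * y 2) * (y 1)⁻¹) * (y 2)⁻¹ := by
        rw [y_rel₄]
      _ = y 2 * (y 1 * y 3 * (y 1)⁻¹) * (y 2)⁻¹ := by group
      _ = y 2 := by rw [y_rel₃, mul_inv_cancel_right]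
  · exact y_rel₂

/-- Each `yᵢ` is already the image of some `xⱼ`. -/
lemma exists_f_eq_y (i : Fin 4) : ∃ j, f j = y i := by
  fin_cases i
  exacts [⟨0, rfl⟩, ⟨10, rfl⟩, ⟨3, rfl⟩, ⟨2, rfl⟩]

end Stmt1

open Stmt1 in
theorem stmt1 :
    (∀ r ∈ sourceRels, FreeGroup.lift f r = 1) ∧
    ∃ φ : SourceGroup →* TargetGroup,
      (∀ j : Fin 11, φ (PresentedGroup.of j) = f j) ∧ Function.Surjective φ := by
  refine ⟨lift_f_eq_one, PresentedGroup.toGroup lift_f_eq_one,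
    fun j => PresentedGroup.toGroup.of lift_f_eq_one, ?_⟩
  rw [← MonoidHom.range_eq_top, eq_top_iff, ← PresentedGroup.closure_range_of,
    Subgroup.closure_le]
  rintro _ ⟨i, rfl⟩
  obtain ⟨j, hj⟩ := exists_f_eq_y i
  exact ⟨PresentedGroup.of j, (PresentedGroup.toGroup.of lift_f_eq_one).trans hj⟩
end

section
/- Let G be the presented group with generators x₁,…,x₁₁ and relators x₈x₁x₈⁻¹x₂⁻¹, x₄x₃x₄⁻¹x₂⁻¹, x₁₁x₃x₁₁⁻¹x₄⁻¹, x₇x₅x₇⁻¹x₄⁻¹, x₁₀x₅x₁₀⁻¹x₆⁻¹, x₅x₇x₅⁻¹x₆⁻¹, x₉x₇x₉⁻¹x₈⁻¹, x₂x₈x₂⁻¹x₉⁻¹, x₆x₉x₆⁻¹x₁₀⁻¹, x₁x₁₁x₁⁻¹x₁₀⁻¹ (a Wirtinger presentation of the knot group of 11a_51). Then the assignment x₁ ↦ y₁, x₂ ↦ y₁, x₃ ↦ y₄, x₄ ↦ y₃, x₅ ↦ y₂, x₆ ↦ y₂y₁y₂⁻¹, x₇ ↦ y₁, x₈ ↦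 y₁, x₉ ↦ y₁, x₁₀ ↦ y₃, x₁₁ ↦ y₂ sends every relator of G to the identity of G(4₁), hence induces a group homomorphism G → G(4₁), and this homomorphism is surjective. -/
/-!
Write `a, b, c, d` for `y₁, y₂, y₃, y₄`, so that `d b = a d`, `a b = c a` and `b d = c b` in
`G(4₁)`. Seven of the ten relators of `11a_51` map to words that are trivial in the free group or
are themselves defining relators. The remaining three amount to `c d = a c` (the Wirtinger
relation at the fourth crossing of the figure-eight diagram, omitted from the presentation),
`c b c⁻¹ = b a b⁻¹` and `(b a b⁻¹) a (b a b⁻¹)⁻¹ = c`; each follows from the three relations.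
The induced homomorphism is onto because `y₁, y₂, y₃, y₄` all occur among the prescribed images.
-/

/-!
Statement 2: the assignment given in the paper sends every relator of the
Wirtinger presentation of the knot group of `11a_51` to the identity of the
figure-eight knot group G(4_1), hence induces a group homomorphism, and this homomorphism
is surjective.

Generators are indexed by `Fin`, with `xⱼ` corresponding to index `j - 1`
(and similarly `yⱼ` to `j - 1`).
-/

namespace Stmt2

/-- Relators of the figure-eight knot group G(4_1). -/
def targetRels : Set (FreeGroup (Fin 4)) :=
  {FreeGroup.of 3 * FreeGroup.of 1 * (FreeGroup.of 3)⁻¹ * (FreeGroup.of 0)⁻¹,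
   FreeGroup.of 0 * FreeGroup.of 1 * (FreeGroup.of 0)⁻¹ * (FreeGroup.of 2)⁻¹,
   FreeGroup.of 1 * FreeGroup.of 3 * (FreeGroup.of 1)⁻¹ * (FreeGroup.of 2)⁻¹}

/-- The figure-eight knot group G(4_1), as a presented group. -/
abbrev TargetGroup : Type := PresentedGroup targetRels

/-- The images of the generators `y₁, …, y_4` in the target group. -/
def y : Fin 4 → TargetGroup := PresentedGroup.of

/-- Relators of the Wirtinger presentation of the knot group of `11a_51`. -/
def sourceRels : Set (FreeGroup (Fin 11)) :=
  {FreeGroup.of 7 * FreeGroup.of 0 * (FreeGroup.of 7)⁻¹ * (FreeGroup.of 1)⁻¹,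
   FreeGroup.of 3 * FreeGroup.of 2 * (FreeGroup.of 3)⁻¹ * (FreeGroup.of 1)⁻¹,
   FreeGroup.of 10 * FreeGroup.of 2 * (FreeGroup.of 10)⁻¹ * (FreeGroup.of 3)⁻¹,
   FreeGroup.of 6 * FreeGroup.of 4 * (FreeGroup.of 6)⁻¹ * (FreeGroup.of 3)⁻¹,
   FreeGroup.of 9 * FreeGroup.of 4 * (FreeGroup.of 9)⁻¹ * (FreeGroup.of 5)⁻¹,
   FreeGroup.of 4 * FreeGroup.of 6 * (FreeGroup.of 4)⁻¹ * (FreeGroup.of 5)⁻¹,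
   FreeGroup.of 8 * FreeGroup.of 6 * (FreeGroup.of 8)⁻¹ * (FreeGroup.of 7)⁻¹,
   FreeGroup.of 1 * FreeGroup.of 7 * (FreeGroup.of 1)⁻¹ * (FreeGroup.of 8)⁻¹,
   FreeGroup.of 5 * FreeGroup.of 8 * (FreeGroup.of 5)⁻¹ * (FreeGroup.of 9)⁻¹,
   FreeGroup.of 0 * FreeGroup.of 10 * (FreeGroup.of 0)⁻¹ * (FreeGroup.of 9)⁻¹}

/-- The knot group of `11a_51`, as a presented group. -/
abbrev SourceGroup : Type := PresentedGroup sourceRels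

/-- The prescribed images of the generators `x₁, …, x₁₁`. -/
def f : Fin 11 → TargetGroup :=
  ![y 0,
   y 0,
   y 3,
   y 2,
   y 1,
   y 1 * y 0 * (y 1)⁻¹,
   y 0,
   y 0,
   y 0,
   y 2,
   y 1]

end Stmt2

namespace Stmt2

lemma rel_d : y 3 * y 1 = y 0 * y 3 := by
  have h : PresentedGroup.mk targetRels _ = 1 :=
    PresentedGroup.one_of_mem (rels := targetRels) (Or.inl rfl)
  simp only [map_mul, map_inv] at h
  exact mul_inv_eq_iff_eq_mul.mp (mul_inv_eq_one.mp h)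

lemma rel_a : y 0 * y 1 = y 2 * y 0 := by
  have h : PresentedGroup.mk targetRels _ = 1 :=
    PresentedGroup.one_of_mem (rels := targetRels) (Or.inr (Or.inl rfl))
  simp only [map_mul, map_inv] at h
  exact mul_inv_eq_iff_eq_mul.mp (mul_inv_eq_one.mp h)

lemma rel_b : y 1 * y 3 = y 2 * y 1 := by
  have h : PresentedGroup.mk targetRels _ = 1 :=
    PresentedGroup.one_of_mem (rels := targetRels) (Or.inr (Or.inr rfl))
  simp only [map_mul, map_inv] at h
  exact mul_inv_eq_iff_eq_mul.mp (mul_inv_eq_one.mp h)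

section Relations

variable {G : Type*} [Group G] {a b c d : G}

/-- The Wirtinger relation at the fourth crossing of the figure-eight diagram. -/
lemma fourth_relation (hd : d * b = a * d) (ha : a * b = c * a) (hb : b * d = c * b) :
    c * d = a * c := by
  have ea : a = d * b * d⁻¹ := eq_mul_inv_of_mul_eq hd.symm
  have ec : c = b * d * b⁻¹ := eq_mul_inv_of_mul_eq hb.symm
  -- In terms of `b` and `d`, the relation `a b = c a` is the claim up to right multiplication.
  calc c * d = (c * a) * (d * b⁻¹) := by rw [ea]; group
    _ = (a * b) * (d * b⁻¹) := by rw [ha]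
    _ = a * c := by rw [ec]; group

lemma conj_b_by_c (hd : d * b = a * d) (hb : b * d = c * b) :
    c * b = b * a * b⁻¹ * c := by
  have ea : a = d * b * d⁻¹ := eq_mul_inv_of_mul_eq hd.symm
  have ec : c = b * d * b⁻¹ := eq_mul_inv_of_mul_eq hb.symm
  rw [ea, ec]; group

lemma conj_a_by_conj (hd : d * b = a * d) (ha : a * b = c * a) (hb : b * d = c * b) :
    b * a * b⁻¹ * a = c * (b * a * b⁻¹) := by
  have ec : c = a * b * a⁻¹ := eq_mul_inv_of_mul_eq ha.symm
  have ed : d = b⁻¹ * c * b := by rw [mul_assoc, ← hb]; group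
  -- Eliminating `c` and `d` turns `d b = a d` into a relation between `a` and `b` alone.
  calc b * a * b⁻¹ * a = b * (a * d) * b⁻¹ * a * b⁻¹ := by rw [ed, ec]; group
    _ = b * (d * b) * b⁻¹ * a * b⁻¹ := by rw [hd]
    _ = c * (b * a * b⁻¹) := by rw [ed]; group

end Relations

lemma lift_f_eq_one : ∀ r ∈ sourceRels, FreeGroup.lift f r = 1 := by
  have key : ∀ i j k : Fin 11, f i * f j = f k * f i → FreeGroup.lift f
      (FreeGroup.of i * FreeGroup.of j * (FreeGroup.of i)⁻¹ * (FreeGroup.of k)⁻¹) = 1 := by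
    intro i j k h
    simp only [map_mul, map_inv, FreeGroup.lift_apply_of]
    exact mul_inv_eq_one.mpr (mul_inv_eq_of_eq_mul h)
  rintro r (rfl | rfl | rfl | rfl | rfl | rfl | rfl | rfl | rfl | rfl) <;> apply key
  · rfl
  · exact fourth_relation rel_d rel_a rel_b
  · exact rel_b
  · exact rel_a
  · exact conj_b_by_c rel_d rel_b
  · exact (inv_mul_cancel_right _ _).symm
  · rfl
  · rfl
  · exact conj_a_by_conj rel_d rel_a rel_b
  · exact rel_a

end Stmt2

open Stmt2 in
theorem stmt2 :
    (∀ r ∈ sourceRels, FreeGroup.lift f r = 1) ∧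
    ∃ φ : SourceGroup →* TargetGroup,
      (∀ j : Fin 11, φ (PresentedGroup.of j) = f j) ∧ Function.Surjective φ := by
  have hφ : ∀ j : Fin 11, PresentedGroup.toGroup lift_f_eq_one (PresentedGroup.of j) = f j :=
    fun j => PresentedGroup.toGroup.of lift_f_eq_one
  refine ⟨lift_f_eq_one, PresentedGroup.toGroup lift_f_eq_one, hφ, ?_⟩
  rw [← MonoidHom.range_eq_top, eq_top_iff, ← PresentedGroup.closure_range_of targetRels,
    Subgroup.closure_le]
  rintro _ ⟨i, rfl⟩
  -- `y₁, y₂, y₃, y₄` are the images of `x₁, x₅, x₄, x₃`.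
  fin_cases i
  · exact ⟨_, hφ 0⟩
  · exact ⟨_, hφ 4⟩
  · exact ⟨_, hφ 3⟩
  · exact ⟨_, hφ 2⟩
end

section
/- Let G be the presented group with generators x₁,…,x₁₁ and relators x₅x₁x₅⁻¹x₂⁻¹, x₈x₂x₈⁻¹x₃⁻¹, x₁₀x₄x₁₀⁻¹x₃⁻¹, x₆x₅x₆⁻¹x₄⁻¹, x₁x₅x₁⁻¹x₆⁻¹, x₉x₇x₉⁻¹x₆⁻¹, x₁₁x₈x₁₁⁻¹x₇⁻¹, x₂x₈x₂⁻¹x₉⁻¹, x₄x₁₀x₄⁻¹x₉⁻¹, x₇x₁₁x₇⁻¹x₁₀⁻¹ (a Wirtinger presentation of the knot group of 11a_132). Then the assignment x₁ ↦ y₁, x₂ ↦ y₂, x₃ ↦ y₂y₁y₂⁻¹, x₄ ↦ y₂, x₅ ↦ y₁⁻¹y₂y₄y₁y₂⁻¹, x₆ ↦ y₂y₁y₂⁻¹, x₇ ↦ y₃, x₈ ↦ y₃, x₉ ↦ y₂y₃y₂⁻¹, x₁₀ ↦ y₃, x₁₁ ↦ y₃ sends every relator of G to the identity of G(4₁), hence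 induces a group homomorphism G → G(4₁), and this homomorphism is surjective. -/
/-!
Write `a, b, c, d` for `y₁, y₂, y₃, y₄`. The second and third relators of `G(4₁)` give
`c = a b a⁻¹` and `d = b⁻¹ c b = b⁻¹ a b a⁻¹ b`, so `G(4₁)` is generated by `a` and `b`, and the
first relator becomes the single relation `w = 1` with `w = b⁻¹ a b a⁻¹ b a b⁻¹ a⁻¹ b a⁻¹`
(`two_generator_relation`). Also `x₅` maps to `b a⁻¹ b a b⁻¹` (`f_four`).

After this substitution the image of each relator of the source group is either freely trivial or
a conjugate of `w` or `w⁻¹`, by an explicit conjugator (`lift_relator`). Surjectivity holds since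
`y₁, y₂, y₃` are images of `x₁, x₂, x₇` and `y₄ = y₂⁻¹ y₃ y₂`.
-/

/-!
Statement 3: the assignment given in the paper sends every relator of the
Wirtinger presentation of the knot group of `11a_132` to the identity of the
figure-eight knot group G(4_1), hence induces a group homomorphism, and this homomorphism
is surjective.

Generators are indexed by `Fin`, with `xⱼ` corresponding to index `j - 1`
(and similarly `yⱼ` to `j - 1`).
-/

namespace Stmt3

/-- Relators of the figure-eight knot group G(4_1). -/
def targetRels : Set (FreeGroup (Fin 4)) :=
  {FreeGroup.of 3 * FreeGroup.of 1 * (FreeGroup.of 3)⁻¹ * (FreeGroup.of 0)⁻¹,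
   FreeGroup.of 0 * FreeGroup.of 1 * (FreeGroup.of 0)⁻¹ * (FreeGroup.of 2)⁻¹,
   FreeGroup.of 1 * FreeGroup.of 3 * (FreeGroup.of 1)⁻¹ * (FreeGroup.of 2)⁻¹}

/-- The figure-eight knot group G(4_1), as a presented group. -/
abbrev TargetGroup : Type := PresentedGroup targetRels

/-- The images of the generators `y₁, …, y_4` in the target group. -/
def y : Fin 4 → TargetGroup := PresentedGroup.of

/-- Relators of the Wirtinger presentation of the knot group of `11a_132`. -/
def sourceRels : Set (FreeGroup (Fin 11)) :=
  {FreeGroup.of 4 * FreeGroup.of 0 * (FreeGroup.of 4)⁻¹ * (FreeGroup.of 1)⁻¹,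
   FreeGroup.of 7 * FreeGroup.of 1 * (FreeGroup.of 7)⁻¹ * (FreeGroup.of 2)⁻¹,
   FreeGroup.of 9 * FreeGroup.of 3 * (FreeGroup.of 9)⁻¹ * (FreeGroup.of 2)⁻¹,
   FreeGroup.of 5 * FreeGroup.of 4 * (FreeGroup.of 5)⁻¹ * (FreeGroup.of 3)⁻¹,
   FreeGroup.of 0 * FreeGroup.of 4 * (FreeGroup.of 0)⁻¹ * (FreeGroup.of 5)⁻¹,
   FreeGroup.of 8 * FreeGroup.of 6 * (FreeGroup.of 8)⁻¹ * (FreeGroup.of 5)⁻¹,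
   FreeGroup.of 10 * FreeGroup.of 7 * (FreeGroup.of 10)⁻¹ * (FreeGroup.of 6)⁻¹,
   FreeGroup.of 1 * FreeGroup.of 7 * (FreeGroup.of 1)⁻¹ * (FreeGroup.of 8)⁻¹,
   FreeGroup.of 3 * FreeGroup.of 9 * (FreeGroup.of 3)⁻¹ * (FreeGroup.of 8)⁻¹,
   FreeGroup.of 6 * FreeGroup.of 10 * (FreeGroup.of 6)⁻¹ * (FreeGroup.of 9)⁻¹}

/-- The knot group of `11a_132`, as a presented group. -/
abbrev SourceGroup : Type := PresentedGroup sourceRels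

/-- The prescribed images of the generators `x₁, …, x₁₁`. -/
def f : Fin 11 → TargetGroup :=
  ![y 0,
   y 1,
   y 1 * y 0 * (y 1)⁻¹,
   y 1,
   (y 0)⁻¹ * y 1 * y 3 * y 0 * (y 1)⁻¹,
   y 1 * y 0 * (y 1)⁻¹,
   y 2,
   y 2,
   y 1 * y 2 * (y 1)⁻¹,
   y 2,
   y 2]

end Stmt3

namespace Stmt3

lemma y_two : y 2 = y 0 * y 1 * (y 0)⁻¹ := by
  have h : PresentedGroup.mk targetRels _ = 1 :=
    PresentedGroup.one_of_mem (show FreeGroup.of 0 * FreeGroup.of 1 * (FreeGroup.of 0)⁻¹ *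
      (FreeGroup.of 2)⁻¹ ∈ targetRels by simp [targetRels])
  simp only [map_mul, map_inv] at h
  exact (mul_inv_eq_one.mp h).symm

lemma y_three : y 3 = (y 1)⁻¹ * y 2 * y 1 := by
  have h : PresentedGroup.mk targetRels _ = 1 :=
    PresentedGroup.one_of_mem (show FreeGroup.of 1 * FreeGroup.of 3 * (FreeGroup.of 1)⁻¹ *
      (FreeGroup.of 2)⁻¹ ∈ targetRels by simp [targetRels])
  simp only [map_mul, map_inv] at h
  have h' : y 1 * y 3 * (y 1)⁻¹ = y 2 := mul_inv_eq_one.mp h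
  rw [← h']
  group

/-- The defining word of the two-generator one-relator presentation of the figure-eight knot
group. -/
def word {G : Type*} [Group G] (a b : G) : G :=
  b⁻¹ * a * b * a⁻¹ * b * a * b⁻¹ * a⁻¹ * b * a⁻¹

lemma two_generator_relation : word (y 0) (y 1) = 1 := by
  have h : PresentedGroup.mk targetRels _ = 1 :=
    PresentedGroup.one_of_mem (show FreeGroup.of 3 * FreeGroup.of 1 * (FreeGroup.of 3)⁻¹ *
      (FreeGroup.of 0)⁻¹ ∈ targetRels by simp [targetRels])
  simp only [map_mul, map_inv] at h
  have h' : y 3 * y 1 * (y 3)⁻¹ * (y 0)⁻¹ = 1 := h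
  rw [← h', y_three, y_two, word]
  group

lemma f_four : f 4 = y 1 * (y 0)⁻¹ * y 1 * y 0 * (y 1)⁻¹ := by
  change (y 0)⁻¹ * y 1 * y 3 * y 0 * (y 1)⁻¹ = _
  rw [y_three, y_two]
  group

lemma eq_one_of_eq_conj {G : Type*} [Group G] {u w : G} (g : G) (hw : w = 1)
    (h : u = g * w * g⁻¹) : u = 1 := by
  rw [h, hw]
  group

lemma lift_relator : ∀ r ∈ sourceRels, FreeGroup.lift f r = 1 := by
  have f0 : f 0 = y 0 := rfl
  have f1 : f 1 = y 1 := rfl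
  have f2 : f 2 = y 1 * y 0 * (y 1)⁻¹ := rfl
  have f3 : f 3 = y 1 := rfl
  have f5 : f 5 = y 1 * y 0 * (y 1)⁻¹ := rfl
  have f6 : f 6 = y 2 := rfl
  have f7 : f 7 = y 2 := rfl
  have f8 : f 8 = y 1 * y 2 * (y 1)⁻¹ := rfl
  have f9 : f 9 = y 2 := rfl
  have f10 : f 10 = y 2 := rfl
  have hw := two_generator_relation
  have hw' : (word (y 0) (y 1))⁻¹ = 1 := inv_eq_one.mpr hw
  intro r hr
  simp only [sourceRels, Set.mem_insert_iff, Set.mem_singleton_iff] at hr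
  rcases hr with rfl | rfl | rfl | rfl | rfl | rfl | rfl | rfl | rfl | rfl <;>
    simp only [map_mul, map_inv, FreeGroup.lift_apply_of, f0, f1, f2, f3, f_four, f5, f6, f7, f8,
      f9, f10, y_two]
  · refine eq_one_of_eq_conj (y 1 * (y 0)⁻¹ * y 1) hw' ?_
    rw [word]; group
  · refine eq_one_of_eq_conj (y 1) hw ?_
    rw [word]; group
  · refine eq_one_of_eq_conj (y 1) hw ?_
    rw [word]; group
  · group
  · refine eq_one_of_eq_conj (y 1) hw ?_
    rw [word]; group
  · refine eq_one_of_eq_conj (y 1 * y 0 * y 1 * (y 0)⁻¹) hw ?_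
    rw [word]; group
  all_goals group

end Stmt3

open Stmt3 in
theorem stmt3 :
    (∀ r ∈ sourceRels, FreeGroup.lift f r = 1) ∧
    ∃ φ : SourceGroup →* TargetGroup,
      (∀ j : Fin 11, φ (PresentedGroup.of j) = f j) ∧ Function.Surjective φ := by
  refine ⟨lift_relator, PresentedGroup.toGroup lift_relator,
    fun j => PresentedGroup.toGroup.of lift_relator, ?_⟩
  rw [← MonoidHom.range_eq_top, eq_top_iff, ← PresentedGroup.closure_range_of, Subgroup.closure_le]
  have hmem : ∀ j, f j ∈ (PresentedGroup.toGroup lift_relator).range := fun j =>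
    ⟨PresentedGroup.of j, PresentedGroup.toGroup.of lift_relator⟩
  have h0 : y 0 ∈ (PresentedGroup.toGroup lift_relator).range := hmem 0
  have h1 : y 1 ∈ (PresentedGroup.toGroup lift_relator).range := hmem 1
  have h2 : y 2 ∈ (PresentedGroup.toGroup lift_relator).range := hmem 6
  have h3 : y 3 ∈ (PresentedGroup.toGroup lift_relator).range := by
    rw [y_three]
    exact mul_mem (mul_mem (inv_mem h1) h2) h1
  rintro _ ⟨i, rfl⟩
  fin_cases i
  exacts [h0, h1, h2, h3]
end

section
/- Let G be the presented group with generators x₁,…,x₁₁ and relators x₁₁x₂x₁₁⁻¹x₁⁻¹, x₅x₃x₅⁻¹x₂⁻¹, x₇x₃x₇⁻¹x₄⁻¹, x₈x₅x₈⁻¹x₄⁻¹, x₉x₅x₉⁻¹x₆⁻¹, x₁x₇x₁⁻¹x₆⁻¹, x₁₀x₈x₁₀⁻¹x₇⁻¹, x₂x₈x₂⁻¹x₉⁻¹, x₃x₁₀x₃⁻¹x₉⁻¹, x₄x₁₀x₄⁻¹x₁₁⁻¹ (a Wirtinger presentation of the knot group of 11a_239). Then the assignment x₁ ↦ y₁,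 x₂ ↦ y₁, x₃ ↦ y₂, x₄ ↦ y₃, x₅ ↦ y₄, x₆ ↦ y₁, x₇ ↦ y₁, x₈ ↦ y₂, x₉ ↦ y₃, x₁₀ ↦ y₄, x₁₁ ↦ y₁ sends every relator of G to the identity of G(4₁), hence induces a group homomorphism G → G(4₁), and this homomorphism is surjective. -/
/-!
The relators of `11a_239` map to words of three kinds in `G(4₁)`: freely trivial ones, the
three defining relators, and `y₃y₄y₃⁻¹y₁⁻¹`. The last is the omitted Wirtinger relator of the
figure-eight diagram (one relator of a Wirtinger presentation is always redundant), which is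
`third_arc_conj` below. Surjectivity holds because every `yᵢ` is among the prescribed images.
-/

/-!
Statement 4: the assignment given in the paper sends every relator of the
Wirtinger presentation of the knot group of `11a_239` to the identity of the
figure-eight knot group G(4_1), hence induces a group homomorphism, and this homomorphism
is surjective.

Generators are indexed by `Fin`, with `xⱼ` corresponding to index `j - 1`
(and similarly `yⱼ` to `j - 1`).
-/

namespace Stmt4

/-- Relators of the figure-eight knot group G(4_1). -/
def targetRels : Set (FreeGroup (Fin 4)) :=
  {FreeGroup.of 3 * FreeGroup.of 1 * (FreeGroup.of 3)⁻¹ * (FreeGroup.of 0)⁻¹,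
   FreeGroup.of 0 * FreeGroup.of 1 * (FreeGroup.of 0)⁻¹ * (FreeGroup.of 2)⁻¹,
   FreeGroup.of 1 * FreeGroup.of 3 * (FreeGroup.of 1)⁻¹ * (FreeGroup.of 2)⁻¹}

/-- The figure-eight knot group G(4_1), as a presented group. -/
abbrev TargetGroup : Type := PresentedGroup targetRels

/-- The images of the generators `y₁, …, y_4` in the target group. -/
def y : Fin 4 → TargetGroup := PresentedGroup.of

/-- Relators of the Wirtinger presentation of the knot group of `11a_239`. -/
def sourceRels : Set (FreeGroup (Fin 11)) :=
  {FreeGroup.of 10 * FreeGroup.of 1 * (FreeGroup.of 10)⁻¹ * (FreeGroup.of 0)⁻¹,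
   FreeGroup.of 4 * FreeGroup.of 2 * (FreeGroup.of 4)⁻¹ * (FreeGroup.of 1)⁻¹,
   FreeGroup.of 6 * FreeGroup.of 2 * (FreeGroup.of 6)⁻¹ * (FreeGroup.of 3)⁻¹,
   FreeGroup.of 7 * FreeGroup.of 4 * (FreeGroup.of 7)⁻¹ * (FreeGroup.of 3)⁻¹,
   FreeGroup.of 8 * FreeGroup.of 4 * (FreeGroup.of 8)⁻¹ * (FreeGroup.of 5)⁻¹,
   FreeGroup.of 0 * FreeGroup.of 6 * (FreeGroup.of 0)⁻¹ * (FreeGroup.of 5)⁻¹,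
   FreeGroup.of 9 * FreeGroup.of 7 * (FreeGroup.of 9)⁻¹ * (FreeGroup.of 6)⁻¹,
   FreeGroup.of 1 * FreeGroup.of 7 * (FreeGroup.of 1)⁻¹ * (FreeGroup.of 8)⁻¹,
   FreeGroup.of 2 * FreeGroup.of 9 * (FreeGroup.of 2)⁻¹ * (FreeGroup.of 8)⁻¹,
   FreeGroup.of 3 * FreeGroup.of 9 * (FreeGroup.of 3)⁻¹ * (FreeGroup.of 10)⁻¹}

/-- The knot group of `11a_239`, as a presented group. -/
abbrev SourceGroup : Type := PresentedGroup sourceRels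

/-- The prescribed images of the generators `x₁, …, x₁₁`. -/
def f : Fin 11 → TargetGroup :=
  ![y 0,
   y 0,
   y 1,
   y 2,
   y 3,
   y 0,
   y 0,
   y 1,
   y 2,
   y 3,
   y 0]

end Stmt4

namespace Stmt4

lemma y_rel₁ : y 3 * y 1 * (y 3)⁻¹ * (y 0)⁻¹ = 1 :=
  PresentedGroup.one_of_mem (rels := targetRels) (by simp [targetRels])

lemma y_rel₂ : y 0 * y 1 * (y 0)⁻¹ * (y 2)⁻¹ = 1 :=
  PresentedGroup.one_of_mem (rels := targetRels) (by simp [targetRels])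

lemma y_rel₃ : y 1 * y 3 * (y 1)⁻¹ * (y 2)⁻¹ = 1 :=
  PresentedGroup.one_of_mem (rels := targetRels) (by simp [targetRels])

/-- The fourth Wirtinger relator of the figure-eight knot follows from the other three: both
`y₃y₄y₂` and `y₁y₃y₂` equal `y₃y₁y₄`. -/
lemma third_arc_conj : y 2 * y 3 * (y 2)⁻¹ * (y 0)⁻¹ = 1 := by
  have h₁ : y 3 * y 1 = y 0 * y 3 := mul_inv_eq_iff_eq_mul.mp (mul_inv_eq_one.mp y_rel₁)
  have h₂ : y 0 * y 1 = y 2 * y 0 := mul_inv_eq_iff_eq_mul.mp (mul_inv_eq_one.mp y_rel₂)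
  have h₃ : y 1 * y 3 = y 2 * y 1 := mul_inv_eq_iff_eq_mul.mp (mul_inv_eq_one.mp y_rel₃)
  rw [mul_inv_eq_one, mul_inv_eq_iff_eq_mul]
  apply mul_right_cancel (b := y 1)
  rw [mul_assoc, h₁, ← mul_assoc, ← h₂, mul_assoc, h₃, ← mul_assoc]

lemma lift_f_eq_one : ∀ r ∈ sourceRels, FreeGroup.lift f r = 1 := by
  intro r hr
  simp only [sourceRels, Set.mem_insert_iff, Set.mem_singleton_iff] at hr
  rcases hr with rfl | rfl | rfl | rfl | rfl | rfl | rfl | rfl | rfl | rfl <;>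
    simp only [map_mul, map_inv, FreeGroup.lift_apply_of]
  · change y 0 * y 0 * (y 0)⁻¹ * (y 0)⁻¹ = 1
    group
  · exact y_rel₁
  · exact y_rel₂
  · exact y_rel₃
  · exact third_arc_conj
  · change y 0 * y 0 * (y 0)⁻¹ * (y 0)⁻¹ = 1
    group
  · exact y_rel₁
  · exact y_rel₂
  · exact y_rel₃
  · exact third_arc_conj

end Stmt4

open Stmt4 in
theorem stmt4 :
    (∀ r ∈ sourceRels, FreeGroup.lift f r = 1) ∧
    ∃ φ : SourceGroup →* TargetGroup,
      (∀ j : Fin 11, φ (PresentedGroup.of j) = f j) ∧ Function.Surjective φ := by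
  refine ⟨lift_f_eq_one, PresentedGroup.toGroup lift_f_eq_one,
    fun j => PresentedGroup.toGroup.of lift_f_eq_one, ?_⟩
  rw [← MonoidHom.range_eq_top, eq_top_iff, ← PresentedGroup.closure_range_of targetRels,
    Subgroup.closure_le]
  rintro _ ⟨i, rfl⟩
  -- The generators `x₁, x₃, x₄, x₅` map to `y₁, y₂, y₃, y₄`.
  refine ⟨PresentedGroup.of (![0, 2, 3, 4] i), ?_⟩
  rw [PresentedGroup.toGroup.of]
  fin_cases i <;> rfl
end

section
/- Let G be the presented group with generators x₁,…,x₁₁ and relators x₁₀x₂x₁₀⁻¹x₁⁻¹, x₆x₂x₆⁻¹x₃⁻¹, x₁₁x₃x₁₁⁻¹x₄⁻¹, x₇x₅x₇⁻¹x₄⁻¹, x₉x₅x₉⁻¹x₆⁻¹, x₁x₆x₁⁻¹x₇⁻¹, x₄x₈x₄⁻¹x₇⁻¹, x₃x₈x₃⁻¹x₉⁻¹, x₂x₁₀x₂⁻¹x₉⁻¹, x₅x₁₀x₅⁻¹x₁₁⁻¹ (a Wirtinger presentation of the knot group of 11a_297). Then the assignment x₁ ↦ y₁, x₂ ↦ y₂,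 x₃ ↦ y₂, x₄ ↦ y₂, x₅ ↦ y₂y₄⁻¹y₃, x₆ ↦ y₂, x₇ ↦ y₃, x₈ ↦ y₄, x₉ ↦ y₃, x₁₀ ↦ y₄, x₁₁ ↦ y₂ sends every relator of G to the identity of G(4₁), hence induces a group homomorphism G → G(4₁), and this homomorphism is surjective. -/
/-!
Nine of the ten source relators map either to a trivial word or to a defining relator of G(4₁), up
to conjugation and inversion. The remaining one, from `x₅x₁₀x₅⁻¹x₁₁⁻¹`, amounts to `y₃y₄y₃⁻¹ = y₁`, the fourth
Wirtinger relation of the figure-eight diagram (`fourth_rel`), which follows from the other three.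
Surjectivity holds since `y₁, y₂, y₃, y₄` are the images of `x₁, x₂, x₇, x₈`.
-/

/-!
Statement 5: the assignment given in the paper sends every relator of the
Wirtinger presentation of the knot group of `11a_297` to the identity of the
figure-eight knot group G(4_1), hence induces a group homomorphism, and this homomorphism
is surjective.

Generators are indexed by `Fin`, with `xⱼ` corresponding to index `j - 1`
(and similarly `yⱼ` to `j - 1`).
-/

namespace Stmt5

/-- Relators of the figure-eight knot group G(4_1). -/
def targetRels : Set (FreeGroup (Fin 4)) :=
  {FreeGroup.of 3 * FreeGroup.of 1 * (FreeGroup.of 3)⁻¹ * (FreeGroup.of 0)⁻¹,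
   FreeGroup.of 0 * FreeGroup.of 1 * (FreeGroup.of 0)⁻¹ * (FreeGroup.of 2)⁻¹,
   FreeGroup.of 1 * FreeGroup.of 3 * (FreeGroup.of 1)⁻¹ * (FreeGroup.of 2)⁻¹}

/-- The figure-eight knot group G(4_1), as a presented group. -/
abbrev TargetGroup : Type := PresentedGroup targetRels

/-- The images of the generators `y₁, …, y_4` in the target group. -/
def y : Fin 4 → TargetGroup := PresentedGroup.of

/-- Relators of the Wirtinger presentation of the knot group of `11a_297`. -/
def sourceRels : Set (FreeGroup (Fin 11)) :=
  {FreeGroup.of 9 * FreeGroup.of 1 * (FreeGroup.of 9)⁻¹ * (FreeGroup.of 0)⁻¹,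
   FreeGroup.of 5 * FreeGroup.of 1 * (FreeGroup.of 5)⁻¹ * (FreeGroup.of 2)⁻¹,
   FreeGroup.of 10 * FreeGroup.of 2 * (FreeGroup.of 10)⁻¹ * (FreeGroup.of 3)⁻¹,
   FreeGroup.of 6 * FreeGroup.of 4 * (FreeGroup.of 6)⁻¹ * (FreeGroup.of 3)⁻¹,
   FreeGroup.of 8 * FreeGroup.of 4 * (FreeGroup.of 8)⁻¹ * (FreeGroup.of 5)⁻¹,
   FreeGroup.of 0 * FreeGroup.of 5 * (FreeGroup.of 0)⁻¹ * (FreeGroup.of 6)⁻¹,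
   FreeGroup.of 3 * FreeGroup.of 7 * (FreeGroup.of 3)⁻¹ * (FreeGroup.of 6)⁻¹,
   FreeGroup.of 2 * FreeGroup.of 7 * (FreeGroup.of 2)⁻¹ * (FreeGroup.of 8)⁻¹,
   FreeGroup.of 1 * FreeGroup.of 9 * (FreeGroup.of 1)⁻¹ * (FreeGroup.of 8)⁻¹,
   FreeGroup.of 4 * FreeGroup.of 9 * (FreeGroup.of 4)⁻¹ * (FreeGroup.of 10)⁻¹}

/-- The knot group of `11a_297`, as a presented group. -/
abbrev SourceGroup : Type := PresentedGroup sourceRels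

/-- The prescribed images of the generators `x₁, …, x₁₁`. -/
def f : Fin 11 → TargetGroup :=
  ![y 0,
   y 1,
   y 1,
   y 1,
   y 1 * (y 3)⁻¹ * y 2,
   y 1,
   y 2,
   y 3,
   y 2,
   y 3,
   y 1]

end Stmt5

namespace Stmt5

lemma rel_one : y 3 * y 1 * (y 3)⁻¹ = y 0 :=
  mul_inv_eq_one.mp (PresentedGroup.one_of_mem (rels := targetRels) (by simp [targetRels]))

lemma rel_two : y 0 * y 1 * (y 0)⁻¹ = y 2 :=
  mul_inv_eq_one.mp (PresentedGroup.one_of_mem (rels := targetRels) (by simp [targetRels]))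

lemma rel_three : y 1 * y 3 * (y 1)⁻¹ = y 2 :=
  mul_inv_eq_one.mp (PresentedGroup.one_of_mem (rels := targetRels) (by simp [targetRels]))

/-- The redundant Wirtinger relation: `y₁⁻¹y₃ = y₂y₁⁻¹ = y₂y₄y₂⁻¹y₄⁻¹ = y₃y₄⁻¹`. -/
lemma fourth_rel : y 2 * y 3 * (y 2)⁻¹ = y 0 := by
  have h : (y 0)⁻¹ * y 2 = y 2 * (y 3)⁻¹ := by
    calc (y 0)⁻¹ * y 2 = y 1 * (y 0)⁻¹ := by rw [← rel_two]; group
      _ = y 1 * y 3 * (y 1)⁻¹ * (y 3)⁻¹ := by rw [← rel_one]; group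
      _ = y 2 * (y 3)⁻¹ := by rw [rel_three]
  calc y 2 * y 3 * (y 2)⁻¹ = y 2 * (y 2 * (y 3)⁻¹)⁻¹ := by group
    _ = y 0 := by rw [← h]; group

lemma conj_image_five : y 2 * (y 1 * (y 3)⁻¹ * y 2) * (y 2)⁻¹ = y 1 := by
  rw [← rel_three]; group

lemma image_five_conj :
    y 1 * (y 3)⁻¹ * y 2 * y 3 * (y 1 * (y 3)⁻¹ * y 2)⁻¹ = y 1 := by
  calc _ = y 1 * (y 3)⁻¹ * (y 2 * y 3 * (y 2)⁻¹) * y 3 * (y 1)⁻¹ := by group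
    _ = y 1 := by rw [fourth_rel, ← rel_one]; group

lemma lift_rel : ∀ r ∈ sourceRels, FreeGroup.lift f r = 1 := by
  intro r hr
  simp only [sourceRels, Set.mem_insert_iff, Set.mem_singleton_iff] at hr
  rcases hr with rfl | rfl | rfl | rfl | rfl | rfl | rfl | rfl | rfl | rfl <;>
    simp only [map_mul, map_inv, FreeGroup.lift_apply_of, mul_inv_eq_one]
  · exact rel_one
  · exact mul_inv_cancel_right (y 1) (y 1)
  · exact mul_inv_cancel_right (y 1) (y 1)
  · exact conj_image_five
  · exact conj_image_five
  · exact rel_two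
  · exact rel_three
  · exact rel_three
  · exact rel_three
  · exact image_five_conj

end Stmt5

open Stmt5 in
theorem stmt5 :
    (∀ r ∈ sourceRels, FreeGroup.lift f r = 1) ∧
    ∃ φ : SourceGroup →* TargetGroup,
      (∀ j : Fin 11, φ (PresentedGroup.of j) = f j) ∧ Function.Surjective φ := by
  refine ⟨lift_rel, PresentedGroup.toGroup lift_rel, fun j => PresentedGroup.toGroup.of _, ?_⟩
  rw [← MonoidHom.range_eq_top, eq_top_iff, ← PresentedGroup.closure_range_of targetRels,
    Subgroup.closure_le]
  rintro _ ⟨i, rfl⟩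
  fin_cases i
  · exact ⟨PresentedGroup.of 0, PresentedGroup.toGroup.of _⟩
  · exact ⟨PresentedGroup.of 1, PresentedGroup.toGroup.of _⟩
  · exact ⟨PresentedGroup.of 6, PresentedGroup.toGroup.of _⟩
  · exact ⟨PresentedGroup.of 7, PresentedGroup.toGroup.of _⟩
end

section
/- Let G be the presented group with generators x₁,…,x₁₁ and relators x₅x₂x₅⁻¹x₁⁻¹, x₁₁x₃x₁₁⁻¹x₂⁻¹, x₇x₄x₇⁻¹x₃⁻¹, x₁₀x₄x₁₀⁻¹x₅⁻¹, x₉x₆x₉⁻¹x₅⁻¹, x₃x₇x₃⁻¹x₆⁻¹, x₄x₈x₄⁻¹x₇⁻¹, x₂x₈x₂⁻¹x₉⁻¹, x₁x₁₀x₁⁻¹x₉⁻¹, x₈x₁₁x₈⁻¹x₁₀⁻¹ (a Wirtinger presentation of the knot group of 11a_348). Then the assignment x₁ ↦ y₁, x₂ ↦ y₃, x₃ ↦ y₄, x₄ ↦ y₄, x₅ ↦ y₁y₄y₁⁻¹, x₆ ↦ y₄, x₇ ↦ y₄, x₈ ↦ y₄, x₉ ↦ y₁, x₁₀ ↦ y₁,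 x₁₁ ↦ y₂ sends every relator of G to the identity of G(4₁), hence induces a group homomorphism G → G(4₁), and this homomorphism is surjective. -/
/-!
The three defining relations of G(4₁) say y₄y₂y₄⁻¹ = y₁, y₁y₂y₁⁻¹ = y₃ and y₂y₄y₂⁻¹ = y₃.
Under the assignment, eight of the ten relators become one of these or trivial identities.
Relator 1 becomes y₁(y₄y₂y₄⁻¹)y₁⁻¹ = y₁ after substituting y₃ = y₁y₂y₁⁻¹. Relator 8 becomes the
redundant fourth Wirtinger relation y₃y₄y₃⁻¹ = y₁ (`rel_four`): by the second and third
relations y₃y₄ = y₁y₂y₁⁻¹y₄ and y₁y₃ = y₁y₂y₄y₂⁻¹, which agree because y₄y₂ = y₁y₄.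
Surjectivity holds because every yᵢ is the image of some generator.
-/

/-!
Statement 6: the assignment given in the paper sends every relator of the
Wirtinger presentation of the knot group of `11a_348` to the identity of the
figure-eight knot group G(4_1), hence induces a group homomorphism, and this homomorphism
is surjective.

Generators are indexed by `Fin`, with `xⱼ` corresponding to index `j - 1`
(and similarly `yⱼ` to `j - 1`).
-/

namespace Stmt6

/-- Relators of the figure-eight knot group G(4_1). -/
def targetRels : Set (FreeGroup (Fin 4)) :=
  {FreeGroup.of 3 * FreeGroup.of 1 * (FreeGroup.of 3)⁻¹ * (FreeGroup.of 0)⁻¹,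
   FreeGroup.of 0 * FreeGroup.of 1 * (FreeGroup.of 0)⁻¹ * (FreeGroup.of 2)⁻¹,
   FreeGroup.of 1 * FreeGroup.of 3 * (FreeGroup.of 1)⁻¹ * (FreeGroup.of 2)⁻¹}

/-- The figure-eight knot group G(4_1), as a presented group. -/
abbrev TargetGroup : Type := PresentedGroup targetRels

/-- The images of the generators `y₁, …, y_4` in the target group. -/
def y : Fin 4 → TargetGroup := PresentedGroup.of

/-- Relators of the Wirtinger presentation of the knot group of `11a_348`. -/
def sourceRels : Set (FreeGroup (Fin 11)) :=
  {FreeGroup.of 4 * FreeGroup.of 1 * (FreeGroup.of 4)⁻¹ * (FreeGroup.of 0)⁻¹,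
   FreeGroup.of 10 * FreeGroup.of 2 * (FreeGroup.of 10)⁻¹ * (FreeGroup.of 1)⁻¹,
   FreeGroup.of 6 * FreeGroup.of 3 * (FreeGroup.of 6)⁻¹ * (FreeGroup.of 2)⁻¹,
   FreeGroup.of 9 * FreeGroup.of 3 * (FreeGroup.of 9)⁻¹ * (FreeGroup.of 4)⁻¹,
   FreeGroup.of 8 * FreeGroup.of 5 * (FreeGroup.of 8)⁻¹ * (FreeGroup.of 4)⁻¹,
   FreeGroup.of 2 * FreeGroup.of 6 * (FreeGroup.of 2)⁻¹ * (FreeGroup.of 5)⁻¹,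
   FreeGroup.of 3 * FreeGroup.of 7 * (FreeGroup.of 3)⁻¹ * (FreeGroup.of 6)⁻¹,
   FreeGroup.of 1 * FreeGroup.of 7 * (FreeGroup.of 1)⁻¹ * (FreeGroup.of 8)⁻¹,
   FreeGroup.of 0 * FreeGroup.of 9 * (FreeGroup.of 0)⁻¹ * (FreeGroup.of 8)⁻¹,
   FreeGroup.of 7 * FreeGroup.of 10 * (FreeGroup.of 7)⁻¹ * (FreeGroup.of 9)⁻¹}

/-- The knot group of `11a_348`, as a presented group. -/
abbrev SourceGroup : Type := PresentedGroup sourceRels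

/-- The prescribed images of the generators `x₁, …, x₁₁`. -/
def f : Fin 11 → TargetGroup :=
  ![y 0,
   y 2,
   y 3,
   y 3,
   y 0 * y 3 * (y 0)⁻¹,
   y 3,
   y 3,
   y 3,
   y 0,
   y 0,
   y 1]

end Stmt6

namespace Stmt6

lemma rel_one : y 3 * y 1 * (y 3)⁻¹ = y 0 :=
  mul_inv_eq_one.mp (PresentedGroup.one_of_mem (rels := targetRels) (by simp [targetRels]))

lemma rel_two : y 0 * y 1 * (y 0)⁻¹ = y 2 :=
  mul_inv_eq_one.mp (PresentedGroup.one_of_mem (rels := targetRels) (by simp [targetRels]))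

lemma rel_three : y 1 * y 3 * (y 1)⁻¹ = y 2 :=
  mul_inv_eq_one.mp (PresentedGroup.one_of_mem (rels := targetRels) (by simp [targetRels]))

/-- The Wirtinger relation of the figure-eight diagram omitted from the presentation; it follows
from the other three. -/
lemma rel_four : y 2 * y 3 * (y 2)⁻¹ = y 0 := by
  rw [mul_inv_eq_iff_eq_mul]
  have h : (y 0)⁻¹ * y 3 = y 3 * (y 1)⁻¹ := by
    rw [← rel_one]; group
  calc y 2 * y 3 = y 0 * y 1 * ((y 0)⁻¹ * y 3) := by rw [← rel_two]; group
    _ = y 0 * (y 1 * y 3 * (y 1)⁻¹) := by rw [h]; group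
    _ = y 0 * y 2 := by rw [rel_three]

/-- The image of the first relator of the source. -/
lemma image_rel_one :
    y 0 * y 3 * (y 0)⁻¹ * y 2 * (y 0 * y 3 * (y 0)⁻¹)⁻¹ = y 0 := by
  calc _ = y 0 * (y 3 * y 1 * (y 3)⁻¹) * (y 0)⁻¹ := by rw [← rel_two]; group
    _ = y 0 := by rw [rel_one]; group

lemma lift_rel (r : FreeGroup (Fin 11)) (hr : r ∈ sourceRels) : FreeGroup.lift f r = 1 := by
  simp only [sourceRels, Set.mem_insert_iff, Set.mem_singleton_iff] at hr
  rcases hr with rfl | rfl | rfl | rfl | rfl | rfl | rfl | rfl | rfl | rfl <;>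
    simp only [map_mul, map_inv, FreeGroup.lift_apply_of] <;>
    rw [mul_inv_eq_one]
  · exact image_rel_one
  · exact rel_three
  · exact mul_inv_cancel_right (y 3) (y 3)
  · rfl
  · rfl
  · exact mul_inv_cancel_right (y 3) (y 3)
  · exact mul_inv_cancel_right (y 3) (y 3)
  · exact rel_four
  · exact mul_inv_cancel_right (y 0) (y 0)
  · exact rel_one

end Stmt6

open Stmt6 in
theorem stmt6 :
    (∀ r ∈ sourceRels, FreeGroup.lift f r = 1) ∧
    ∃ φ : SourceGroup →* TargetGroup,
      (∀ j : Fin 11, φ (PresentedGroup.of j) = f j) ∧ Function.Surjective φ := by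
  refine ⟨lift_rel, PresentedGroup.toGroup lift_rel, fun j => PresentedGroup.toGroup.of lift_rel, ?_⟩
  rw [← MonoidHom.range_eq_top, eq_top_iff, ← PresentedGroup.closure_range_of targetRels,
    Subgroup.closure_le]
  rintro _ ⟨i, rfl⟩
  -- y₁, y₂, y₃, y₄ are the images of x₁, x₁₁, x₂, x₃.
  exact ⟨PresentedGroup.of ((![0, 10, 1, 2] : Fin 4 → Fin 11) i), by
    rw [PresentedGroup.toGroup.of]; fin_cases i <;> rfl⟩
end

section
/- Let G be the presented group with generators x₁,…,x₁₁ and relators x₁₀x₂x₁₀⁻¹x₁⁻¹, x₈x₂x₈⁻¹x₃⁻¹, x₇x₄x₇⁻¹x₃⁻¹, x₂x₅x₂⁻¹x₄⁻¹, x₉x₆x₉⁻¹x₅⁻¹, x₁x₆x₁⁻¹x₇⁻¹, x₁₁x₈x₁₁⁻¹x₇⁻¹, x₆x₉x₆⁻¹x₈⁻¹, x₅x₁₀x₅⁻¹x₉⁻¹, x₄x₁₀x₄⁻¹x₁₁⁻¹ (a Wirtinger presentation of the knot group of 11a_349). Then the assignment x₁ ↦ y₁, x₂ ↦ y₂, x₃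 ↦ y₁, x₄ ↦ y₃, x₅ ↦ y₄, x₆ ↦ y₄, x₇ ↦ y₁y₄y₁⁻¹, x₈ ↦ y₄, x₉ ↦ y₄, x₁₀ ↦ y₄, x₁₁ ↦ y₁ sends every relator of G to the identity of G(4₁), hence induces a group homomorphism G → G(4₁), and this homomorphism is surjective. -/
/-!
Statement 7: the assignment given in the paper sends every relator of the
Wirtinger presentation of the knot group of `11a_349` to the identity of the
figure-eight knot group G(4_1), hence induces a group homomorphism, and this homomorphism
is surjective.

Generators are indexed by `Fin`, with `xⱼ` corresponding to index `j - 1`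
(and similarly `yⱼ` to `j - 1`).
-/

/-!
Write `a, b, c, d` for `y₁, y₂, y₃, y₄`. The target relations read `d b = a d`, `a b = c a`,
`b d = c b`. Nine of the source relators map to a trivial word, to one of these three relations, or
to a consequence of two of them after cancelling the conjugation by `a`. The last one,
`x₄x₁₀x₄⁻¹x₁₁⁻¹`, maps to the fourth Wirtinger relation `c d = a c` of the figure-eight diagram,
which is redundant: `a c b = a b d = c a d = c d b`. Surjectivity holds because every `yᵢ` is itself
the image of some generator.
-/

namespace Stmt7

/-- Relators of the figure-eight knot group G(4_1). -/
def targetRels : Set (FreeGroup (Fin 4)) :=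
  {FreeGroup.of 3 * FreeGroup.of 1 * (FreeGroup.of 3)⁻¹ * (FreeGroup.of 0)⁻¹,
   FreeGroup.of 0 * FreeGroup.of 1 * (FreeGroup.of 0)⁻¹ * (FreeGroup.of 2)⁻¹,
   FreeGroup.of 1 * FreeGroup.of 3 * (FreeGroup.of 1)⁻¹ * (FreeGroup.of 2)⁻¹}

/-- The figure-eight knot group G(4_1), as a presented group. -/
abbrev TargetGroup : Type := PresentedGroup targetRels

/-- The images of the generators `y₁, …, y_4` in the target group. -/
def y : Fin 4 → TargetGroup := PresentedGroup.of

/-- Relators of the Wirtinger presentation of the knot group of `11a_349`. -/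
def sourceRels : Set (FreeGroup (Fin 11)) :=
  {FreeGroup.of 9 * FreeGroup.of 1 * (FreeGroup.of 9)⁻¹ * (FreeGroup.of 0)⁻¹,
   FreeGroup.of 7 * FreeGroup.of 1 * (FreeGroup.of 7)⁻¹ * (FreeGroup.of 2)⁻¹,
   FreeGroup.of 6 * FreeGroup.of 3 * (FreeGroup.of 6)⁻¹ * (FreeGroup.of 2)⁻¹,
   FreeGroup.of 1 * FreeGroup.of 4 * (FreeGroup.of 1)⁻¹ * (FreeGroup.of 3)⁻¹,
   FreeGroup.of 8 * FreeGroup.of 5 * (FreeGroup.of 8)⁻¹ * (FreeGroup.of 4)⁻¹,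
   FreeGroup.of 0 * FreeGroup.of 5 * (FreeGroup.of 0)⁻¹ * (FreeGroup.of 6)⁻¹,
   FreeGroup.of 10 * FreeGroup.of 7 * (FreeGroup.of 10)⁻¹ * (FreeGroup.of 6)⁻¹,
   FreeGroup.of 5 * FreeGroup.of 8 * (FreeGroup.of 5)⁻¹ * (FreeGroup.of 7)⁻¹,
   FreeGroup.of 4 * FreeGroup.of 9 * (FreeGroup.of 4)⁻¹ * (FreeGroup.of 8)⁻¹,
   FreeGroup.of 3 * FreeGroup.of 9 * (FreeGroup.of 3)⁻¹ * (FreeGroup.of 10)⁻¹}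

/-- The knot group of `11a_349`, as a presented group. -/
abbrev SourceGroup : Type := PresentedGroup sourceRels

/-- The prescribed images of the generators `x₁, …, x₁₁`. -/
def f : Fin 11 → TargetGroup :=
  ![y 0,
   y 1,
   y 0,
   y 2,
   y 3,
   y 3,
   y 0 * y 3 * (y 0)⁻¹,
   y 3,
   y 3,
   y 3,
   y 0]

end Stmt7

namespace Stmt7

lemma y_rel₁ : y 3 * y 1 = y 0 * y 3 := by
  have h : PresentedGroup.mk targetRels
      (FreeGroup.of 3 * FreeGroup.of 1 * (FreeGroup.of 3)⁻¹ * (FreeGroup.of 0)⁻¹) = 1 :=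
    PresentedGroup.one_of_mem (by simp [targetRels])
  simp only [map_mul, map_inv] at h
  exact mul_inv_eq_iff_eq_mul.mp (mul_inv_eq_one.mp h)

lemma y_rel₂ : y 0 * y 1 = y 2 * y 0 := by
  have h : PresentedGroup.mk targetRels
      (FreeGroup.of 0 * FreeGroup.of 1 * (FreeGroup.of 0)⁻¹ * (FreeGroup.of 2)⁻¹) = 1 :=
    PresentedGroup.one_of_mem (by simp [targetRels])
  simp only [map_mul, map_inv] at h
  exact mul_inv_eq_iff_eq_mul.mp (mul_inv_eq_one.mp h)

lemma y_rel₃ : y 1 * y 3 = y 2 * y 1 := by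
  have h : PresentedGroup.mk targetRels
      (FreeGroup.of 1 * FreeGroup.of 3 * (FreeGroup.of 1)⁻¹ * (FreeGroup.of 2)⁻¹) = 1 :=
    PresentedGroup.one_of_mem (by simp [targetRels])
  simp only [map_mul, map_inv] at h
  exact mul_inv_eq_iff_eq_mul.mp (mul_inv_eq_one.mp h)

/-- The fourth Wirtinger relation of the figure-eight diagram, a consequence of the other three. -/
lemma y_rel₄ : y 2 * y 3 = y 0 * y 2 := by
  apply mul_right_cancel (b := y 1)
  rw [mul_assoc, y_rel₁, ← mul_assoc, ← y_rel₂, mul_assoc, y_rel₃, mul_assoc]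

/-- The image of `x₇x₄ = x₃x₇`, where `x₇ ↦ y₁y₄y₁⁻¹`. -/
lemma y_conj : y 0 * y 3 * (y 0)⁻¹ * y 2 = y 0 * (y 0 * y 3 * (y 0)⁻¹) := by
  have h : (y 0)⁻¹ * y 2 = y 1 * (y 0)⁻¹ := by
    rw [inv_mul_eq_iff_eq_mul, ← mul_assoc, y_rel₂, mul_inv_cancel_right]
  rw [mul_assoc, h, ← mul_assoc, mul_assoc (y 0), y_rel₁]
  simp only [mul_assoc]

lemma lift_f_eq_one : ∀ r ∈ sourceRels, FreeGroup.lift f r = 1 := by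
  intro r hr
  simp only [sourceRels, Set.mem_insert_iff, Set.mem_singleton_iff] at hr
  rcases hr with rfl | rfl | rfl | rfl | rfl | rfl | rfl | rfl | rfl | rfl <;>
    simp only [map_mul, map_inv, FreeGroup.lift_apply_of] <;>
    rw [mul_inv_eq_one, mul_inv_eq_iff_eq_mul]
  · exact y_rel₁
  · exact y_rel₁
  · exact y_conj
  · exact y_rel₃
  · rfl
  · exact (inv_mul_cancel_right (y 0 * y 3) (y 0)).symm
  · exact (inv_mul_cancel_right (y 0 * y 3) (y 0)).symm
  · rfl
  · rfl
  · exact y_rel₄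

end Stmt7

open Stmt7 in
theorem stmt7 :
    (∀ r ∈ sourceRels, FreeGroup.lift f r = 1) ∧
    ∃ φ : SourceGroup →* TargetGroup,
      (∀ j : Fin 11, φ (PresentedGroup.of j) = f j) ∧ Function.Surjective φ := by
  refine ⟨lift_f_eq_one, PresentedGroup.toGroup lift_f_eq_one,
    fun j => PresentedGroup.toGroup.of lift_f_eq_one, ?_⟩
  rw [← MonoidHom.range_eq_top, eq_top_iff, ← PresentedGroup.closure_range_of targetRels,
    Subgroup.closure_le]
  rintro _ ⟨i, rfl⟩
  -- `y₁, y₂, y₃, y₄` are the images of `x₁, x₂, x₄, x₅`.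
  refine ⟨PresentedGroup.of (![0, 1, 3, 4] i), ?_⟩
  rw [PresentedGroup.toGroup.of]
  fin_cases i <;> rfl
end

section
/- Let G be the presented group with generators x₁,…,x₁₁ and relators x₆x₁x₆⁻¹x₂⁻¹, x₁x₃x₁⁻¹x₂⁻¹, x₇x₄x₇⁻¹x₃⁻¹, x₁₀x₅x₁₀⁻¹x₄⁻¹, x₂x₅x₂⁻¹x₆⁻¹, x₄x₇x₄⁻¹x₆⁻¹, x₃x₈x₃⁻¹x₇⁻¹, x₁x₈x₁⁻¹x₉⁻¹, x₁₁x₉x₁₁⁻¹x₁₀⁻¹, x₄x₁₁x₄⁻¹x₁₀⁻¹ (a Wirtinger presentation of the knot group of 11n_100). Then the assignment x₁ ↦ y₁, x₂ ↦ y₁y₃y₁⁻¹, x₃ ↦ y₃, x₄ ↦ y₁, x₅ ↦ y₃, x₆ ↦ y₁y₂y₃⁻¹, x₇ ↦ y₂y₁y₂⁻¹, x₈ ↦ y₂, x₉ ↦ y₃, x₁₀ ↦ y₁y₄y₁⁻¹, x₁₁ ↦ y₄ sends every relator of G to the identity of G(4₁), hence induces a group homomorphism G → G(4₁), and this homomorphism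 is surjective. -/
/-!
Write `a, b, c, d` for the generators `y₁, y₂, y₃, y₄` of the figure-eight group. Its relators say
`d b d⁻¹ = a`, `a b a⁻¹ = c`, `b d b⁻¹ = c`. As usual for a knot diagram, one crossing
relation was left out, and it follows from the others: here it is `c d c⁻¹ = a` (`fourth_relation`).
With these four relations, each of the ten source relators is a short computation
(`relators_hold`). The induced homomorphism is surjective because `y₁, y₂, y₃, y₄` are themselves
the images of `x₁, x₈, x₃, x₁₁`.
-/

/-!
Statement 8: the assignment given in the paper sends every relator of the
Wirtinger presentation of the knot group of `11n_100` to the identity of the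
figure-eight knot group G(4_1), hence induces a group homomorphism, and this homomorphism
is surjective.

Generators are indexed by `Fin`, with `xⱼ` corresponding to index `j - 1`
(and similarly `yⱼ` to `j - 1`).
-/

namespace Stmt8

/-- Relators of the figure-eight knot group G(4_1). -/
def targetRels : Set (FreeGroup (Fin 4)) :=
  {FreeGroup.of 3 * FreeGroup.of 1 * (FreeGroup.of 3)⁻¹ * (FreeGroup.of 0)⁻¹,
   FreeGroup.of 0 * FreeGroup.of 1 * (FreeGroup.of 0)⁻¹ * (FreeGroup.of 2)⁻¹,
   FreeGroup.of 1 * FreeGroup.of 3 * (FreeGroup.of 1)⁻¹ * (FreeGroup.of 2)⁻¹}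

/-- The figure-eight knot group G(4_1), as a presented group. -/
abbrev TargetGroup : Type := PresentedGroup targetRels

/-- The images of the generators `y₁, …, y_4` in the target group. -/
def y : Fin 4 → TargetGroup := PresentedGroup.of

/-- Relators of the Wirtinger presentation of the knot group of `11n_100`. -/
def sourceRels : Set (FreeGroup (Fin 11)) :=
  {FreeGroup.of 5 * FreeGroup.of 0 * (FreeGroup.of 5)⁻¹ * (FreeGroup.of 1)⁻¹,
   FreeGroup.of 0 * FreeGroup.of 2 * (FreeGroup.of 0)⁻¹ * (FreeGroup.of 1)⁻¹,
   FreeGroup.of 6 * FreeGroup.of 3 * (FreeGroup.of 6)⁻¹ * (FreeGroup.of 2)⁻¹,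
   FreeGroup.of 9 * FreeGroup.of 4 * (FreeGroup.of 9)⁻¹ * (FreeGroup.of 3)⁻¹,
   FreeGroup.of 1 * FreeGroup.of 4 * (FreeGroup.of 1)⁻¹ * (FreeGroup.of 5)⁻¹,
   FreeGroup.of 3 * FreeGroup.of 6 * (FreeGroup.of 3)⁻¹ * (FreeGroup.of 5)⁻¹,
   FreeGroup.of 2 * FreeGroup.of 7 * (FreeGroup.of 2)⁻¹ * (FreeGroup.of 6)⁻¹,
   FreeGroup.of 0 * FreeGroup.of 7 * (FreeGroup.of 0)⁻¹ * (FreeGroup.of 8)⁻¹,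
   FreeGroup.of 10 * FreeGroup.of 8 * (FreeGroup.of 10)⁻¹ * (FreeGroup.of 9)⁻¹,
   FreeGroup.of 3 * FreeGroup.of 10 * (FreeGroup.of 3)⁻¹ * (FreeGroup.of 9)⁻¹}

/-- The knot group of `11n_100`, as a presented group. -/
abbrev SourceGroup : Type := PresentedGroup sourceRels

/-- The prescribed images of the generators `x₁, …, x₁₁`. -/
def f : Fin 11 → TargetGroup :=
  ![y 0,
   y 0 * y 2 * (y 0)⁻¹,
   y 2,
   y 0,
   y 2,
   y 0 * y 1 * (y 2)⁻¹,
   y 1 * y 0 * (y 1)⁻¹,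
   y 1,
   y 2,
   y 0 * y 3 * (y 0)⁻¹,
   y 3]

end Stmt8

namespace Stmt8

/-- The Wirtinger relation at the omitted fourth crossing of the figure-eight diagram. -/
lemma fourth_relation {G : Type*} [Group G] {a b c d : G} (h1 : d * b * d⁻¹ = a)
    (h2 : a * b * a⁻¹ = c) (h3 : b * d * b⁻¹ = c) : c * d * c⁻¹ = a := by
  have hd : d = b⁻¹ * c * b := by rw [← h3]; group
  have ha : a = b⁻¹ * c * b * c⁻¹ * b := by rw [← h1, hd]; group
  have h : a * b = c * a := by rw [← h2]; group
  calc c * d * c⁻¹ = c * (b⁻¹ * c * b * c⁻¹ * b) * b⁻¹ := by rw [hd]; group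
    _ = (c * a) * b⁻¹ := by rw [← ha]
    _ = a := by rw [← h]; group

/-- Relations 1, 3, 4, 5, 6, 7, 9 of `11n_100` at the prescribed images. The other three need no
argument: 2 and 10 hold by the choice of images, and 8 is the hypothesis `h2`. -/
lemma relators_hold {G : Type*} [Group G] {a b c d : G} (h1 : d * b * d⁻¹ = a)
    (h2 : a * b * a⁻¹ = c) (h3 : b * d * b⁻¹ = c) :
    (a * b * c⁻¹) * a * (a * b * c⁻¹)⁻¹ = a * c * a⁻¹ ∧
    (b * a * b⁻¹) * a * (b * a * b⁻¹)⁻¹ = c ∧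
    (a * d * a⁻¹) * c * (a * d * a⁻¹)⁻¹ = a ∧
    (a * c * a⁻¹) * c * (a * c * a⁻¹)⁻¹ = a * b * c⁻¹ ∧
    a * (b * a * b⁻¹) * a⁻¹ = a * b * c⁻¹ ∧
    c * b * c⁻¹ = b * a * b⁻¹ ∧
    d * c * d⁻¹ = a * d * a⁻¹ := by
  have h4 : c⁻¹ * a * c = d := by rw [← fourth_relation h1 h2 h3]; group
  have hb : a⁻¹ * c * a = b := by rw [← h2]; group
  have hd : b⁻¹ * c * b = d := by rw [← h3]; group
  have h7 : c * b * c⁻¹ = b * a * b⁻¹ := by rw [← h1, ← h3]; group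
  have h6 : a * (b * a * b⁻¹) * a⁻¹ = a * b * c⁻¹ := by rw [← h2]; group
  refine ⟨?_, ?_, ?_, ?_, h6, h7, ?_⟩
  · calc (a * b * c⁻¹) * a * (a * b * c⁻¹)⁻¹ = a * (b * (c⁻¹ * a * c) * b⁻¹) * a⁻¹ := by group
      _ = a * c * a⁻¹ := by rw [h4, h3]
  · calc (b * a * b⁻¹) * a * (b * a * b⁻¹)⁻¹ = c * (b * (c⁻¹ * a * c) * b⁻¹) * c⁻¹ := by
          rw [← h7]; group
      _ = c := by rw [h4, h3]; group
  · calc (a * d * a⁻¹) * c * (a * d * a⁻¹)⁻¹ = a * (d * (a⁻¹ * c * a) * d⁻¹) * a⁻¹ := by group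
      _ = a := by rw [hb, h1]; group
  · calc (a * c * a⁻¹) * c * (a * c * a⁻¹)⁻¹ = a * (c * (a⁻¹ * c * a) * c⁻¹) * a⁻¹ := by group
      _ = a * b * c⁻¹ := by rw [hb, h7, h6]
  · rw [← h3, ← h1]; group

lemma y_rel {i j k : Fin 4} (h : FreeGroup.of i * FreeGroup.of j * (FreeGroup.of i)⁻¹ *
    (FreeGroup.of k)⁻¹ ∈ targetRels) : y i * y j * (y i)⁻¹ = y k := by
  have := PresentedGroup.one_of_mem h
  simp only [map_mul, map_inv] at this
  exact mul_inv_eq_one.mp this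

lemma lift_f_eq_one : ∀ r ∈ sourceRels, FreeGroup.lift f r = 1 := by
  have h1 : y 3 * y 1 * (y 3)⁻¹ = y 0 := y_rel (by simp [targetRels])
  have h2 : y 0 * y 1 * (y 0)⁻¹ = y 2 := y_rel (by simp [targetRels])
  have h3 : y 1 * y 3 * (y 1)⁻¹ = y 2 := y_rel (by simp [targetRels])
  obtain ⟨r1, r3, r4, r5, r6, r7, r9⟩ := relators_hold h1 h2 h3
  intro r hr
  simp only [sourceRels, Set.mem_insert_iff, Set.mem_singleton_iff] at hr
  rcases hr with rfl | rfl | rfl | rfl | rfl | rfl | rfl | rfl | rfl | rfl <;>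
    simp only [map_mul, map_inv, FreeGroup.lift_apply_of] <;>
    refine mul_inv_eq_one.mpr ?_
  exacts [r1, rfl, r3, r4, r5, r6, r7, h2, r9, rfl]

end Stmt8

open Stmt8 in
theorem stmt8 :
    (∀ r ∈ sourceRels, FreeGroup.lift f r = 1) ∧
    ∃ φ : SourceGroup →* TargetGroup,
      (∀ j : Fin 11, φ (PresentedGroup.of j) = f j) ∧ Function.Surjective φ := by
  refine ⟨lift_f_eq_one, PresentedGroup.toGroup lift_f_eq_one,
    fun j => PresentedGroup.toGroup.of lift_f_eq_one, ?_⟩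
  rw [← MonoidHom.range_eq_top, eq_top_iff, ← PresentedGroup.closure_range_of,
    Subgroup.closure_le]
  rintro _ ⟨i, rfl⟩
  have key : ∀ j, f j ∈ (PresentedGroup.toGroup lift_f_eq_one).range :=
    fun j => ⟨PresentedGroup.of j, PresentedGroup.toGroup.of lift_f_eq_one⟩
  fin_cases i
  exacts [key 0, key 7, key 2, key 10]
end

section
/- Let G be the presented group with generators x₁,…,x₁₁ and relators x₁₁x₂x₁₁⁻¹x₁⁻¹, x₉x₃x₉⁻¹x₂⁻¹, x₁₀x₃x₁₀⁻¹x₄⁻¹, x₁₁x₅x₁₁⁻¹x₄⁻¹, x₃x₅x₃⁻¹x₆⁻¹, x₁x₇x₁⁻¹x₆⁻¹, x₄x₈x₄⁻¹x₇⁻¹, x₅x₈x₅⁻¹x₉⁻¹, x₆x₁₀x₆⁻¹x₉⁻¹, x₈x₁₀x₈⁻¹x₁₁⁻¹ (a Wirtinger presentation of the knot group of 11n_148). Then the assignment x₁ ↦ y₁, x₂ ↦ y₁, x₃ ↦ y₄, x₄ ↦ y₃, x₅ ↦ y₂, x₆ ↦ y₁, x₇ ↦ y₁, x₈ ↦ y₄,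 x₉ ↦ y₃, x₁₀ ↦ y₂, x₁₁ ↦ y₁ sends every relator of G to the identity of G(4₁), hence induces a group homomorphism G → G(4₁), and this homomorphism is surjective. -/
/-!
Eight of the ten relators are immediate: writing `a, b, c, d` for `y₁, y₂, y₃, y₄`, each image is
either trivial in the free group or one of the defining relators `d b d⁻¹ = a`, `a b a⁻¹ = c`,
`b d b⁻¹ = c`. The second and the seventh relators map to the fourth Wirtinger relation of the
figure-eight diagram, `c d c⁻¹ = a`, which is redundant and not among the defining relators; it is
recovered from `a c b = a b d = c a d = c d b` by cancelling `b`. The induced map is surjective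
because every `yᵢ` is the image of some `xⱼ`.
-/

/-!
Statement 9: the assignment given in the paper sends every relator of the
Wirtinger presentation of the knot group of `11n_148` to the identity of the
figure-eight knot group G(4_1), hence induces a group homomorphism, and this homomorphism
is surjective.

Generators are indexed by `Fin`, with `xⱼ` corresponding to index `j - 1`
(and similarly `yⱼ` to `j - 1`).
-/

namespace Stmt9

/-- Relators of the figure-eight knot group G(4_1). -/
def targetRels : Set (FreeGroup (Fin 4)) :=
  {FreeGroup.of 3 * FreeGroup.of 1 * (FreeGroup.of 3)⁻¹ * (FreeGroup.of 0)⁻¹,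
   FreeGroup.of 0 * FreeGroup.of 1 * (FreeGroup.of 0)⁻¹ * (FreeGroup.of 2)⁻¹,
   FreeGroup.of 1 * FreeGroup.of 3 * (FreeGroup.of 1)⁻¹ * (FreeGroup.of 2)⁻¹}

/-- The figure-eight knot group G(4_1), as a presented group. -/
abbrev TargetGroup : Type := PresentedGroup targetRels

/-- The images of the generators `y₁, …, y_4` in the target group. -/
def y : Fin 4 → TargetGroup := PresentedGroup.of

/-- Relators of the Wirtinger presentation of the knot group of `11n_148`. -/
def sourceRels : Set (FreeGroup (Fin 11)) :=
  {FreeGroup.of 10 * FreeGroup.of 1 * (FreeGroup.of 10)⁻¹ * (FreeGroup.of 0)⁻¹,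
   FreeGroup.of 8 * FreeGroup.of 2 * (FreeGroup.of 8)⁻¹ * (FreeGroup.of 1)⁻¹,
   FreeGroup.of 9 * FreeGroup.of 2 * (FreeGroup.of 9)⁻¹ * (FreeGroup.of 3)⁻¹,
   FreeGroup.of 10 * FreeGroup.of 4 * (FreeGroup.of 10)⁻¹ * (FreeGroup.of 3)⁻¹,
   FreeGroup.of 2 * FreeGroup.of 4 * (FreeGroup.of 2)⁻¹ * (FreeGroup.of 5)⁻¹,
   FreeGroup.of 0 * FreeGroup.of 6 * (FreeGroup.of 0)⁻¹ * (FreeGroup.of 5)⁻¹,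
   FreeGroup.of 3 * FreeGroup.of 7 * (FreeGroup.of 3)⁻¹ * (FreeGroup.of 6)⁻¹,
   FreeGroup.of 4 * FreeGroup.of 7 * (FreeGroup.of 4)⁻¹ * (FreeGroup.of 8)⁻¹,
   FreeGroup.of 5 * FreeGroup.of 9 * (FreeGroup.of 5)⁻¹ * (FreeGroup.of 8)⁻¹,
   FreeGroup.of 7 * FreeGroup.of 9 * (FreeGroup.of 7)⁻¹ * (FreeGroup.of 10)⁻¹}

/-- The knot group of `11n_148`, as a presented group. -/
abbrev SourceGroup : Type := PresentedGroup sourceRels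

/-- The prescribed images of the generators `x₁, …, x₁₁`. -/
def f : Fin 11 → TargetGroup :=
  ![y 0,
   y 0,
   y 3,
   y 2,
   y 1,
   y 0,
   y 0,
   y 3,
   y 2,
   y 1,
   y 0]

/-- The redundant fourth Wirtinger relation follows from the other three. -/
lemma conj_eq_of_wirtinger {G : Type*} [Group G] {a b c d : G}
    (h₁ : d * b * d⁻¹ = a) (h₂ : a * b * a⁻¹ = c) (h₃ : b * d * b⁻¹ = c) :
    c * d * c⁻¹ = a := by
  rw [mul_inv_eq_iff_eq_mul] at *
  apply mul_right_cancel (b := b)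
  calc c * d * b = c * a * d := by rw [mul_assoc, h₁, mul_assoc]
    _ = a * b * d := by rw [h₂]
    _ = a * c * b := by rw [mul_assoc, h₃, mul_assoc]

lemma y_rel₁ : y 3 * y 1 * (y 3)⁻¹ = y 0 :=
  mul_inv_eq_one.mp (PresentedGroup.one_of_mem (rels := targetRels) (by simp [targetRels]) :
    PresentedGroup.mk targetRels (FreeGroup.of 3 * FreeGroup.of 1 * (FreeGroup.of 3)⁻¹ *
      (FreeGroup.of 0)⁻¹) = 1)

lemma y_rel₂ : y 0 * y 1 * (y 0)⁻¹ = y 2 :=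
  mul_inv_eq_one.mp (PresentedGroup.one_of_mem (rels := targetRels) (by simp [targetRels]) :
    PresentedGroup.mk targetRels (FreeGroup.of 0 * FreeGroup.of 1 * (FreeGroup.of 0)⁻¹ *
      (FreeGroup.of 2)⁻¹) = 1)

lemma y_rel₃ : y 1 * y 3 * (y 1)⁻¹ = y 2 :=
  mul_inv_eq_one.mp (PresentedGroup.one_of_mem (rels := targetRels) (by simp [targetRels]) :
    PresentedGroup.mk targetRels (FreeGroup.of 1 * FreeGroup.of 3 * (FreeGroup.of 1)⁻¹ *
      (FreeGroup.of 2)⁻¹) = 1)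

lemma y_rel₄ : y 2 * y 3 * (y 2)⁻¹ = y 0 :=
  conj_eq_of_wirtinger y_rel₁ y_rel₂ y_rel₃

lemma lift_f_eq_one : ∀ r ∈ sourceRels, FreeGroup.lift f r = 1 := by
  intro r hr
  simp only [sourceRels, Set.mem_insert_iff, Set.mem_singleton_iff] at hr
  rcases hr with rfl | rfl | rfl | rfl | rfl | rfl | rfl | rfl | rfl | rfl <;>
    simp only [map_mul, map_inv, FreeGroup.lift_apply_of, mul_inv_eq_one]
  · exact mul_inv_cancel_right (y 0) (y 0)
  · exact y_rel₄
  · exact y_rel₃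
  · exact y_rel₂
  · exact y_rel₁
  · exact mul_inv_cancel_right (y 0) (y 0)
  · exact y_rel₄
  · exact y_rel₃
  · exact y_rel₂
  · exact y_rel₁

end Stmt9

open Stmt9 in
theorem stmt9 :
    (∀ r ∈ sourceRels, FreeGroup.lift f r = 1) ∧
    ∃ φ : SourceGroup →* TargetGroup,
      (∀ j : Fin 11, φ (PresentedGroup.of j) = f j) ∧ Function.Surjective φ := by
  refine ⟨lift_f_eq_one, PresentedGroup.toGroup lift_f_eq_one,
    fun j => PresentedGroup.toGroup.of _, ?_⟩
  rw [← MonoidHom.range_eq_top, eq_top_iff, ← PresentedGroup.closure_range_of targetRels,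
    Subgroup.closure_le]
  rintro _ ⟨i, rfl⟩
  -- `y₁, y₂, y₃, y₄` are the images of `x₁, x₅, x₄, x₃`.
  refine ⟨PresentedGroup.of ((![0, 4, 3, 2] : Fin 4 → Fin 11) i), ?_⟩
  rw [PresentedGroup.toGroup.of]
  fin_cases i <;> rfl
end

section
/- Let G be the presented group with generators x₁,…,x₁₁ and relators x₅x₁x₅⁻¹x₂⁻¹, x₁₁x₃x₁₁⁻¹x₂⁻¹, x₁x₃x₁⁻¹x₄⁻¹, x₉x₄x₉⁻¹x₅⁻¹, x₈x₆x₈⁻¹x₅⁻¹, x₂x₆x₂⁻¹x₇⁻¹, x₃x₈x₃⁻¹x₇⁻¹, x₂x₈x₂⁻¹x₉⁻¹, x₁x₁₀x₁⁻¹x₉⁻¹, x₈x₁₁x₈⁻¹x₁₀⁻¹ (a Wirtinger presentation of the knot group of 11n_157). Then the assignment x₁ ↦ y₁, x₂ ↦ y₁, x₃ ↦ y₂, x₄ ↦ y₃, x₅ ↦ y₁, x₆ ↦ y₂, x₇ ↦ y₃, x₈ ↦ y₄, x₉ ↦ y₁y₄y₁⁻¹, x₁₀ ↦ y₄, x₁₁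 ↦ y₄ sends every relator of G to the identity of G(4₁), hence induces a group homomorphism G → G(4₁), and this homomorphism is surjective. -/
/-!
Write `a, b, c, d` for `y₁, y₂, y₃, y₄`. The relators of `G(4₁)` say `d b d⁻¹ = a`,
`a b a⁻¹ = c` and `b d b⁻¹ = c` (`target_relations`). Under the assignment every relator of the
source becomes either trivial in the free group or one of these three relations, except
`x₉x₄x₉⁻¹x₅⁻¹`, which becomes `(a d a⁻¹) c (a d a⁻¹)⁻¹ a⁻¹`; there `c = a b a⁻¹` turns the
conjugate into `a (d b d⁻¹) a⁻¹ = a a a⁻¹ = a`. The induced homomorphism is surjective because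
`x₁, x₃, x₄, x₈` are sent to the generators `y₁, y₂, y₃, y₄`.
-/

/-!
Statement 10: the assignment given in the paper sends every relator of the
Wirtinger presentation of the knot group of `11n_157` to the identity of the
figure-eight knot group G(4_1), hence induces a group homomorphism, and this homomorphism
is surjective.

Generators are indexed by `Fin`, with `xⱼ` corresponding to index `j - 1`
(and similarly `yⱼ` to `j - 1`).
-/

namespace Stmt10

/-- Relators of the figure-eight knot group G(4_1). -/
def targetRels : Set (FreeGroup (Fin 4)) :=
  {FreeGroup.of 3 * FreeGroup.of 1 * (FreeGroup.of 3)⁻¹ * (FreeGroup.of 0)⁻¹,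
   FreeGroup.of 0 * FreeGroup.of 1 * (FreeGroup.of 0)⁻¹ * (FreeGroup.of 2)⁻¹,
   FreeGroup.of 1 * FreeGroup.of 3 * (FreeGroup.of 1)⁻¹ * (FreeGroup.of 2)⁻¹}

/-- The figure-eight knot group G(4_1), as a presented group. -/
abbrev TargetGroup : Type := PresentedGroup targetRels

/-- The images of the generators `y₁, …, y_4` in the target group. -/
def y : Fin 4 → TargetGroup := PresentedGroup.of

/-- Relators of the Wirtinger presentation of the knot group of `11n_157`. -/
def sourceRels : Set (FreeGroup (Fin 11)) :=
  {FreeGroup.of 4 * FreeGroup.of 0 * (FreeGroup.of 4)⁻¹ * (FreeGroup.of 1)⁻¹,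
   FreeGroup.of 10 * FreeGroup.of 2 * (FreeGroup.of 10)⁻¹ * (FreeGroup.of 1)⁻¹,
   FreeGroup.of 0 * FreeGroup.of 2 * (FreeGroup.of 0)⁻¹ * (FreeGroup.of 3)⁻¹,
   FreeGroup.of 8 * FreeGroup.of 3 * (FreeGroup.of 8)⁻¹ * (FreeGroup.of 4)⁻¹,
   FreeGroup.of 7 * FreeGroup.of 5 * (FreeGroup.of 7)⁻¹ * (FreeGroup.of 4)⁻¹,
   FreeGroup.of 1 * FreeGroup.of 5 * (FreeGroup.of 1)⁻¹ * (FreeGroup.of 6)⁻¹,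
   FreeGroup.of 2 * FreeGroup.of 7 * (FreeGroup.of 2)⁻¹ * (FreeGroup.of 6)⁻¹,
   FreeGroup.of 1 * FreeGroup.of 7 * (FreeGroup.of 1)⁻¹ * (FreeGroup.of 8)⁻¹,
   FreeGroup.of 0 * FreeGroup.of 9 * (FreeGroup.of 0)⁻¹ * (FreeGroup.of 8)⁻¹,
   FreeGroup.of 7 * FreeGroup.of 10 * (FreeGroup.of 7)⁻¹ * (FreeGroup.of 9)⁻¹}

/-- The knot group of `11n_157`, as a presented group. -/
abbrev SourceGroup : Type := PresentedGroup sourceRels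

/-- The prescribed images of the generators `x₁, …, x₁₁`. -/
def f : Fin 11 → TargetGroup :=
  ![y 0,
   y 0,
   y 1,
   y 2,
   y 0,
   y 1,
   y 2,
   y 3,
   y 0 * y 3 * (y 0)⁻¹,
   y 3,
   y 3]

end Stmt10

namespace Stmt10

theorem target_relations :
    y 3 * y 1 * (y 3)⁻¹ = y 0 ∧ y 0 * y 1 * (y 0)⁻¹ = y 2 ∧ y 1 * y 3 * (y 1)⁻¹ = y 2 := by
  have h : ∀ r ∈ targetRels, PresentedGroup.mk targetRels r = 1 :=
    fun r hr => PresentedGroup.one_of_mem hr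
  refine ⟨mul_inv_eq_one.mp (h _ (Or.inl rfl)), mul_inv_eq_one.mp (h _ (Or.inr (Or.inl rfl))),
    mul_inv_eq_one.mp (h _ (Or.inr (Or.inr rfl)))⟩

theorem lift_relator : ∀ r ∈ sourceRels, FreeGroup.lift f r = 1 := by
  obtain ⟨h₁, h₂, h₃⟩ := target_relations
  -- The image of `x₉x₄x₉⁻¹x₅⁻¹`, the only relator that needs two of the relations at once.
  have h₄ : y 0 * y 3 * (y 0)⁻¹ * y 2 * (y 0 * y 3 * (y 0)⁻¹)⁻¹ = y 0 := by
    calc _ = y 0 * (y 3 * y 1 * (y 3)⁻¹) * (y 0)⁻¹ := by rw [← h₂]; group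
      _ = y 0 := by rw [h₁]; group
  simp only [sourceRels, Set.mem_insert_iff, Set.mem_singleton_iff, forall_eq_or_imp, forall_eq,
    map_mul, map_inv, mul_inv_eq_one, FreeGroup.lift_apply_of]
  exact ⟨mul_inv_cancel_right _ _, h₁, h₂, h₄, h₁, h₂, h₃, rfl, rfl, mul_inv_cancel_right _ _⟩

end Stmt10

open Stmt10 in
theorem stmt10 :
    (∀ r ∈ sourceRels, FreeGroup.lift f r = 1) ∧
    ∃ φ : SourceGroup →* TargetGroup,
      (∀ j : Fin 11, φ (PresentedGroup.of j) = f j) ∧ Function.Surjective φ := by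
  refine ⟨lift_relator, PresentedGroup.toGroup lift_relator,
    fun j => PresentedGroup.toGroup.of lift_relator, ?_⟩
  rw [← MonoidHom.range_eq_top, eq_top_iff, ← PresentedGroup.closure_range_of targetRels,
    Subgroup.closure_le]
  rintro _ ⟨i, rfl⟩
  -- Indices `0, 2, 3, 7` are those of `x₁, x₃, x₄, x₈`.
  refine ⟨PresentedGroup.of ((![0, 2, 3, 7] : Fin 4 → Fin 11) i), ?_⟩
  rw [PresentedGroup.toGroup.of]
  fin_cases i <;> rfl
end

section
/- Let G be the presented group with generators x₁,…,x₁₁ and relators x₉x₁x₉⁻¹x₂⁻¹, x₅x₃x₅⁻¹x₂⁻¹, x₈x₃x₈⁻¹x₄⁻¹, x₇x₅x₇⁻¹x₄⁻¹, x₃x₆x₃⁻¹x₅⁻¹, x₁₁x₆x₁₁⁻¹x₇⁻¹, x₁₀x₈x₁₀⁻¹x₇⁻¹, x₃x₈x₃⁻¹x₉⁻¹, x₁x₉x₁⁻¹x₁₀⁻¹, x₄x₁₁x₄⁻¹x₁₀⁻¹ (a Wirtinger presentation of the knot group of 11n_165). Then the assignment x₁ ↦ y₁, x₂ ↦ y₁,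 x₃ ↦ y₄, x₄ ↦ y₃, x₅ ↦ y₃, x₆ ↦ y₂y₄⁻¹y₃, x₇ ↦ y₃, x₈ ↦ y₂, x₉ ↦ y₁, x₁₀ ↦ y₁, x₁₁ ↦ y₄ sends every relator of G to the identity of G(4₁), hence induces a group homomorphism G → G(4₁), and this homomorphism is surjective. -/
/-!
Write `a, b, c, d` for `y₁, y₂, y₃, y₄`. The defining relations of G(4₁) are `d b d⁻¹ = a`,
`a b a⁻¹ = c` and `b d b⁻¹ = c`. Under the assignment, each relator of the knot group of `11n_165`
becomes trivial, one of these relations, or the fourth Wirtinger relation `c d c⁻¹ = a` of the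
figure-eight knot, up to rewriting `d b d⁻¹` as `a`. The fourth relation follows from the other
three (`fourth_relation`). Surjectivity holds because every `yⱼ` is the image of a generator.
-/

/-!
Statement 11: the assignment given in the paper sends every relator of the
Wirtinger presentation of the knot group of `11n_165` to the identity of the
figure-eight knot group G(4_1), hence induces a group homomorphism, and this homomorphism
is surjective.

Generators are indexed by `Fin`, with `xⱼ` corresponding to index `j - 1`
(and similarly `yⱼ` to `j - 1`).
-/

namespace Stmt11

/-- Relators of the figure-eight knot group G(4_1). -/
def targetRels : Set (FreeGroup (Fin 4)) :=
  {FreeGroup.of 3 * FreeGroup.of 1 * (FreeGroup.of 3)⁻¹ * (FreeGroup.of 0)⁻¹,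
   FreeGroup.of 0 * FreeGroup.of 1 * (FreeGroup.of 0)⁻¹ * (FreeGroup.of 2)⁻¹,
   FreeGroup.of 1 * FreeGroup.of 3 * (FreeGroup.of 1)⁻¹ * (FreeGroup.of 2)⁻¹}

/-- The figure-eight knot group G(4_1), as a presented group. -/
abbrev TargetGroup : Type := PresentedGroup targetRels

/-- The images of the generators `y₁, …, y_4` in the target group. -/
def y : Fin 4 → TargetGroup := PresentedGroup.of

/-- Relators of the Wirtinger presentation of the knot group of `11n_165`. -/
def sourceRels : Set (FreeGroup (Fin 11)) :=
  {FreeGroup.of 8 * FreeGroup.of 0 * (FreeGroup.of 8)⁻¹ * (FreeGroup.of 1)⁻¹,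
   FreeGroup.of 4 * FreeGroup.of 2 * (FreeGroup.of 4)⁻¹ * (FreeGroup.of 1)⁻¹,
   FreeGroup.of 7 * FreeGroup.of 2 * (FreeGroup.of 7)⁻¹ * (FreeGroup.of 3)⁻¹,
   FreeGroup.of 6 * FreeGroup.of 4 * (FreeGroup.of 6)⁻¹ * (FreeGroup.of 3)⁻¹,
   FreeGroup.of 2 * FreeGroup.of 5 * (FreeGroup.of 2)⁻¹ * (FreeGroup.of 4)⁻¹,
   FreeGroup.of 10 * FreeGroup.of 5 * (FreeGroup.of 10)⁻¹ * (FreeGroup.of 6)⁻¹,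
   FreeGroup.of 9 * FreeGroup.of 7 * (FreeGroup.of 9)⁻¹ * (FreeGroup.of 6)⁻¹,
   FreeGroup.of 2 * FreeGroup.of 7 * (FreeGroup.of 2)⁻¹ * (FreeGroup.of 8)⁻¹,
   FreeGroup.of 0 * FreeGroup.of 8 * (FreeGroup.of 0)⁻¹ * (FreeGroup.of 9)⁻¹,
   FreeGroup.of 3 * FreeGroup.of 10 * (FreeGroup.of 3)⁻¹ * (FreeGroup.of 9)⁻¹}

/-- The knot group of `11n_165`, as a presented group. -/
abbrev SourceGroup : Type := PresentedGroup sourceRels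

/-- The prescribed images of the generators `x₁, …, x₁₁`. -/
def f : Fin 11 → TargetGroup :=
  ![y 0,
   y 0,
   y 3,
   y 2,
   y 2,
   y 1 * (y 3)⁻¹ * y 2,
   y 2,
   y 1,
   y 0,
   y 0,
   y 3]

end Stmt11

namespace Stmt11

theorem y_relation_one : y 3 * y 1 * (y 3)⁻¹ = y 0 :=
  mul_inv_eq_one.mp (PresentedGroup.one_of_mem (rels := targetRels) (Or.inl rfl))

theorem y_relation_two : y 0 * y 1 * (y 0)⁻¹ = y 2 :=
  mul_inv_eq_one.mp (PresentedGroup.one_of_mem (rels := targetRels) (Or.inr (Or.inl rfl)))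

theorem y_relation_three : y 1 * y 3 * (y 1)⁻¹ = y 2 :=
  mul_inv_eq_one.mp (PresentedGroup.one_of_mem (rels := targetRels) (Or.inr (Or.inr rfl)))

/-- The redundant fourth Wirtinger relation of the figure-eight knot. The first and third relations
give `a = d c⁻¹ b`; substituting this into the right side of `a b = c a` and cancelling `b` gives
the claim. -/
theorem fourth_relation {H : Type*} [Group H] {a b c d : H} (h₁ : d * b * d⁻¹ = a)
    (h₂ : a * b * a⁻¹ = c) (h₃ : b * d * b⁻¹ = c) : c * d * c⁻¹ = a := by
  have ha : a = d * c⁻¹ * b := by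
    rw [← h₁, ← h₃]
    group
  have hab : a * b = c * a := mul_inv_eq_iff_eq_mul.mp h₂
  apply mul_right_cancel (b := b)
  calc c * d * c⁻¹ * b = c * (d * c⁻¹ * b) := by group
    _ = a * b := by rw [← ha, hab]

theorem y_relation_four : y 2 * y 3 * (y 2)⁻¹ = y 0 :=
  fourth_relation y_relation_one y_relation_two y_relation_three

/-- The relation imposed by the generator `x₆`, whose image is `y₂ y₄⁻¹ y₃`. -/
theorem y_relation_six : y 3 * (y 1 * (y 3)⁻¹ * y 2) * (y 3)⁻¹ = y 2 := by
  calc y 3 * (y 1 * (y 3)⁻¹ * y 2) * (y 3)⁻¹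
      = (y 3 * y 1 * (y 3)⁻¹) * y 2 * (y 3)⁻¹ := by group
    _ = (y 2 * y 3 * (y 2)⁻¹) * y 2 * (y 3)⁻¹ := by rw [y_relation_one, y_relation_four]
    _ = y 2 := by group

theorem lift_f_sourceRels : ∀ r ∈ sourceRels, FreeGroup.lift f r = 1 := by
  intro r hr
  simp only [sourceRels, Set.mem_insert_iff, Set.mem_singleton_iff] at hr
  rcases hr with rfl | rfl | rfl | rfl | rfl | rfl | rfl | rfl | rfl | rfl <;>
    simp only [map_mul, map_inv, FreeGroup.lift_apply_of] <;>
    rw [mul_inv_eq_one]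
  · exact mul_inv_cancel_right (y 0) (y 0)
  · exact y_relation_four
  · exact y_relation_three
  · exact mul_inv_cancel_right (y 2) (y 2)
  · exact y_relation_six
  · exact y_relation_six
  · exact y_relation_two
  · exact y_relation_one
  · exact mul_inv_cancel_right (y 0) (y 0)
  · exact y_relation_four

end Stmt11

open Stmt11 in
theorem stmt11 :
    (∀ r ∈ sourceRels, FreeGroup.lift f r = 1) ∧
    ∃ φ : SourceGroup →* TargetGroup,
      (∀ j : Fin 11, φ (PresentedGroup.of j) = f j) ∧ Function.Surjective φ := by
  refine ⟨lift_f_sourceRels, PresentedGroup.toGroup lift_f_sourceRels,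
    fun j => PresentedGroup.toGroup.of lift_f_sourceRels, ?_⟩
  rw [← MonoidHom.range_eq_top, eq_top_iff, ← PresentedGroup.closure_range_of targetRels,
    Subgroup.closure_le]
  rintro _ ⟨j, rfl⟩
  -- `y₁, y₂, y₃, y₄` are the images of `x₁, x₈, x₄, x₃`.
  have hf : f (![0, 7, 3, 2] j) = y j := by fin_cases j <;> rfl
  exact ⟨PresentedGroup.of (![0, 7, 3, 2] j),
    (PresentedGroup.toGroup.of lift_f_sourceRels).trans hf⟩
end

section
/- Let G be the presented group with generators x₁,…,x₁₁ and relators x₄x₂x₄⁻¹x₁⁻¹, x₉x₃x₉⁻¹x₂⁻¹, x₁x₄x₁⁻¹x₃⁻¹, x₆x₄x₆⁻¹x₅⁻¹, x₁₁x₅x₁₁⁻¹x₆⁻¹, x₉x₇x₉⁻¹x₆⁻¹, x₆x₈x₆⁻¹x₇⁻¹, x₂x₉x₂⁻¹x₈⁻¹, x₇x₁₀x₇⁻¹x₉⁻¹, x₅x₁₀x₅⁻¹x₁₁⁻¹ (a Wirtinger presentation of the knot group of 11n_78). Then the assignment x₁ ↦ y₁, x₂ ↦ y₅, x₃ ↦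 y₄, x₄ ↦ y₃, x₅ ↦ y₂⁻¹y₄y₂, x₆ ↦ y₄, x₇ ↦ y₂⁻¹y₄y₂, x₈ ↦ y₃, x₉ ↦ y₂, x₁₀ ↦ y₂⁻¹y₁y₂, x₁₁ ↦ y₂ sends every relator of G to the identity of G(5₁), hence induces a group homomorphism G → G(5₁), and this homomorphism is surjective. -/
/-!
The defining relations of `G(5₁)` say `y₄y₁ = y₂y₄`, `y₅y₂ = y₃y₅`, `y₁y₃ = y₄y₁` and
`y₂y₄ = y₅y₂`, so the five products `y₄y₁ = y₂y₄ = y₅y₂ = y₃y₅ = y₁y₃` are one and the same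
element. In particular the redundant fifth Wirtinger relation `y₃y₅ = y₁y₃` holds.

Each relator `x_i x_j x_i⁻¹ x_k⁻¹` of the source becomes an equation `x_i x_j = x_k x_i` between
images. After cancelling conjugations by `y₂`, it is trivial, or one of these equalities, or
`y₂y₄y₃ = y₄y₂y₄`, which holds because `y₂y₄y₃ = y₄(y₁y₃) = y₄(y₂y₄)`.
Surjectivity is clear: `x₁, x₉, x₄, x₃, x₂` map to `y₁, y₂, y₃, y₄, y₅`.
-/

/-!
Statement 12: the assignment given in the paper sends every relator of the
Wirtinger presentation of the knot group of `11n_78` to the identity of the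
(5,2)-torus knot group G(5_1), hence induces a group homomorphism, and this homomorphism
is surjective.

Generators are indexed by `Fin`, with `xⱼ` corresponding to index `j - 1`
(and similarly `yⱼ` to `j - 1`).
-/

namespace Stmt12

/-- Relators of the (5,2)-torus knot group G(5_1). -/
def targetRels : Set (FreeGroup (Fin 5)) :=
  {FreeGroup.of 3 * FreeGroup.of 0 * (FreeGroup.of 3)⁻¹ * (FreeGroup.of 1)⁻¹,
   FreeGroup.of 4 * FreeGroup.of 1 * (FreeGroup.of 4)⁻¹ * (FreeGroup.of 2)⁻¹,
   FreeGroup.of 0 * FreeGroup.of 2 * (FreeGroup.of 0)⁻¹ * (FreeGroup.of 3)⁻¹,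
   FreeGroup.of 1 * FreeGroup.of 3 * (FreeGroup.of 1)⁻¹ * (FreeGroup.of 4)⁻¹}

/-- The (5,2)-torus knot group G(5_1), as a presented group. -/
abbrev TargetGroup : Type := PresentedGroup targetRels

/-- The images of the generators `y₁, …, y_5` in the target group. -/
def y : Fin 5 → TargetGroup := PresentedGroup.of

/-- Relators of the Wirtinger presentation of the knot group of `11n_78`. -/
def sourceRels : Set (FreeGroup (Fin 11)) :=
  {FreeGroup.of 3 * FreeGroup.of 1 * (FreeGroup.of 3)⁻¹ * (FreeGroup.of 0)⁻¹,
   FreeGroup.of 8 * FreeGroup.of 2 * (FreeGroup.of 8)⁻¹ * (FreeGroup.of 1)⁻¹,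
   FreeGroup.of 0 * FreeGroup.of 3 * (FreeGroup.of 0)⁻¹ * (FreeGroup.of 2)⁻¹,
   FreeGroup.of 5 * FreeGroup.of 3 * (FreeGroup.of 5)⁻¹ * (FreeGroup.of 4)⁻¹,
   FreeGroup.of 10 * FreeGroup.of 4 * (FreeGroup.of 10)⁻¹ * (FreeGroup.of 5)⁻¹,
   FreeGroup.of 8 * FreeGroup.of 6 * (FreeGroup.of 8)⁻¹ * (FreeGroup.of 5)⁻¹,
   FreeGroup.of 5 * FreeGroup.of 7 * (FreeGroup.of 5)⁻¹ * (FreeGroup.of 6)⁻¹,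
   FreeGroup.of 1 * FreeGroup.of 8 * (FreeGroup.of 1)⁻¹ * (FreeGroup.of 7)⁻¹,
   FreeGroup.of 6 * FreeGroup.of 9 * (FreeGroup.of 6)⁻¹ * (FreeGroup.of 8)⁻¹,
   FreeGroup.of 4 * FreeGroup.of 9 * (FreeGroup.of 4)⁻¹ * (FreeGroup.of 10)⁻¹}

/-- The knot group of `11n_78`, as a presented group. -/
abbrev SourceGroup : Type := PresentedGroup sourceRels

/-- The prescribed images of the generators `x₁, …, x₁₁`. -/
def f : Fin 11 → TargetGroup :=
  ![y 0,
   y 4,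
   y 3,
   y 2,
   (y 1)⁻¹ * y 3 * y 1,
   y 3,
   (y 1)⁻¹ * y 3 * y 1,
   y 2,
   y 1,
   (y 1)⁻¹ * y 0 * y 1,
   y 1]

end Stmt12

namespace Stmt12

theorem y_three_zero : y 3 * y 0 = y 1 * y 3 := by
  have h : y 3 * y 0 * (y 3)⁻¹ * (y 1)⁻¹ = 1 :=
    PresentedGroup.one_of_mem (rels := targetRels) (by simp [targetRels])
  rwa [mul_inv_eq_one, mul_inv_eq_iff_eq_mul] at h

theorem y_four_one : y 4 * y 1 = y 2 * y 4 := by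
  have h : y 4 * y 1 * (y 4)⁻¹ * (y 2)⁻¹ = 1 :=
    PresentedGroup.one_of_mem (rels := targetRels) (by simp [targetRels])
  rwa [mul_inv_eq_one, mul_inv_eq_iff_eq_mul] at h

theorem y_zero_two : y 0 * y 2 = y 3 * y 0 := by
  have h : y 0 * y 2 * (y 0)⁻¹ * (y 3)⁻¹ = 1 :=
    PresentedGroup.one_of_mem (rels := targetRels) (by simp [targetRels])
  rwa [mul_inv_eq_one, mul_inv_eq_iff_eq_mul] at h

theorem y_one_three : y 1 * y 3 = y 4 * y 1 := by
  have h : y 1 * y 3 * (y 1)⁻¹ * (y 4)⁻¹ = 1 :=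
    PresentedGroup.one_of_mem (rels := targetRels) (by simp [targetRels])
  rwa [mul_inv_eq_one, mul_inv_eq_iff_eq_mul] at h

/-- The Wirtinger relation omitted from the presentation of `G(5₁)`. -/
theorem y_two_four : y 2 * y 4 = y 0 * y 2 := by
  rw [y_zero_two, y_three_zero, y_one_three, y_four_one]

/-- The image of the relations `x₆x₄ = x₅x₆` and `x₆x₈ = x₇x₆`. -/
theorem y_three_two : y 3 * y 2 = (y 1)⁻¹ * y 3 * y 1 * y 3 := by
  have h : y 1 * (y 3 * y 2) = y 3 * y 1 * y 3 := by
    rw [← mul_assoc, ← y_three_zero, mul_assoc, y_zero_two, y_three_zero, mul_assoc]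
  rw [mul_assoc, mul_assoc, eq_inv_mul_iff_mul_eq, h, mul_assoc]

/-- The image of the relations `x₇x₁₀ = x₉x₇` and `x₅x₁₀ = x₁₁x₅`. -/
theorem y_conj_three_zero : (y 1)⁻¹ * y 3 * y 1 * ((y 1)⁻¹ * y 0 * y 1) =
    y 1 * ((y 1)⁻¹ * y 3 * y 1) := by
  calc _ = (y 1)⁻¹ * (y 3 * y 0) * y 1 := by group
    _ = _ := by rw [y_three_zero]; group

theorem lift_f_sourceRels : ∀ r ∈ sourceRels, FreeGroup.lift f r = 1 := by
  intro r hr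
  simp only [sourceRels, Set.mem_insert_iff, Set.mem_singleton_iff] at hr
  rcases hr with rfl | rfl | rfl | rfl | rfl | rfl | rfl | rfl | rfl | rfl <;>
    simp only [map_mul, map_inv, FreeGroup.lift_apply_of] <;>
    rw [mul_inv_eq_one, mul_inv_eq_iff_eq_mul]
  · exact y_two_four
  · exact y_one_three
  · exact y_zero_two
  · exact y_three_two
  · change y 1 * ((y 1)⁻¹ * y 3 * y 1) = y 3 * y 1
    group
  · change y 1 * ((y 1)⁻¹ * y 3 * y 1) = y 3 * y 1
    group
  · exact y_three_two
  · exact y_four_one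
  · exact y_conj_three_zero
  · exact y_conj_three_zero

end Stmt12

open Stmt12 in
theorem stmt12 :
    (∀ r ∈ sourceRels, FreeGroup.lift f r = 1) ∧
    ∃ φ : SourceGroup →* TargetGroup,
      (∀ j : Fin 11, φ (PresentedGroup.of j) = f j) ∧ Function.Surjective φ := by
  refine ⟨lift_f_sourceRels, PresentedGroup.toGroup lift_f_sourceRels,
    fun j => PresentedGroup.toGroup.of lift_f_sourceRels, ?_⟩
  rw [← MonoidHom.range_eq_top, ← top_le_iff, ← PresentedGroup.closure_range_of,
    Subgroup.closure_le]
  rintro _ ⟨i, rfl⟩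
  -- The generators `y₁, …, y₅` are the images of `x₁, x₉, x₄, x₃, x₂`.
  refine ⟨PresentedGroup.of (![0, 8, 3, 2, 1] i), ?_⟩
  rw [PresentedGroup.toGroup.of]
  fin_cases i <;> rfl
end

section
/- Let G be the presented group with generators x₁,…,x₁₁ and relators x₁₁x₂x₁₁⁻¹x₁⁻¹, x₉x₃x₉⁻¹x₂⁻¹, x₁₀x₃x₁₀⁻¹x₄⁻¹, x₁₁x₅x₁₁⁻¹x₄⁻¹, x₃x₅x₃⁻¹x₆⁻¹, x₁x₇x₁⁻¹x₆⁻¹, x₄x₈x₄⁻¹x₇⁻¹, x₅x₈x₅⁻¹x₉⁻¹, x₆x₁₀x₆⁻¹x₉⁻¹, x₈x₁₀x₈⁻¹x₁₁⁻¹ (a Wirtinger presentation of the knot group of 11n_148). Then the assignment x₁ ↦ y₁, x₂ ↦ y₂⁻¹y₁y₂, x₃ ↦ y₄, x₄ ↦ y₅, x₅ ↦ y₄, x₆ ↦ y₄, x₇ ↦ y₃, x₈ ↦ y₂, x₉ ↦ y₂⁻¹y₃y₂, x₁₀ ↦ y₂, x₁₁ ↦ y₂ sends every relator of G to the identity of G(5₁),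 hence induces a group homomorphism G → G(5₁), and this homomorphism is surjective. -/
/-!
Write `a, b, c, d, e` for `y₁, …, y₅`. The four relations of `G(5₁)` say that the five products
`a c = d a = b d = e b = c e` coincide; call the common value `P`. Then `c P = c e b = P b`, that is,
`c b d = b d b`. Up to conjugation, each relator of the source is sent to a trivial word, to one of
the relations of `G(5₁)`, or to this consequence. Surjectivity holds because each of `y₁, …, y₅` is
the image of some `xⱼ`.
-/

/-!
Statement 13: the assignment given in the paper sends every relator of the
Wirtinger presentation of the knot group of `11n_148` to the identity of the
(5,2)-torus knot group G(5_1), hence induces a group homomorphism, and this homomorphism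
is surjective.

Generators are indexed by `Fin`, with `xⱼ` corresponding to index `j - 1`
(and similarly `yⱼ` to `j - 1`).
-/

namespace Stmt13

/-- Relators of the (5,2)-torus knot group G(5_1). -/
def targetRels : Set (FreeGroup (Fin 5)) :=
  {FreeGroup.of 3 * FreeGroup.of 0 * (FreeGroup.of 3)⁻¹ * (FreeGroup.of 1)⁻¹,
   FreeGroup.of 4 * FreeGroup.of 1 * (FreeGroup.of 4)⁻¹ * (FreeGroup.of 2)⁻¹,
   FreeGroup.of 0 * FreeGroup.of 2 * (FreeGroup.of 0)⁻¹ * (FreeGroup.of 3)⁻¹,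
   FreeGroup.of 1 * FreeGroup.of 3 * (FreeGroup.of 1)⁻¹ * (FreeGroup.of 4)⁻¹}

/-- The (5,2)-torus knot group G(5_1), as a presented group. -/
abbrev TargetGroup : Type := PresentedGroup targetRels

/-- The images of the generators `y₁, …, y_5` in the target group. -/
def y : Fin 5 → TargetGroup := PresentedGroup.of

/-- Relators of the Wirtinger presentation of the knot group of `11n_148`. -/
def sourceRels : Set (FreeGroup (Fin 11)) :=
  {FreeGroup.of 10 * FreeGroup.of 1 * (FreeGroup.of 10)⁻¹ * (FreeGroup.of 0)⁻¹,
   FreeGroup.of 8 * FreeGroup.of 2 * (FreeGroup.of 8)⁻¹ * (FreeGroup.of 1)⁻¹,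
   FreeGroup.of 9 * FreeGroup.of 2 * (FreeGroup.of 9)⁻¹ * (FreeGroup.of 3)⁻¹,
   FreeGroup.of 10 * FreeGroup.of 4 * (FreeGroup.of 10)⁻¹ * (FreeGroup.of 3)⁻¹,
   FreeGroup.of 2 * FreeGroup.of 4 * (FreeGroup.of 2)⁻¹ * (FreeGroup.of 5)⁻¹,
   FreeGroup.of 0 * FreeGroup.of 6 * (FreeGroup.of 0)⁻¹ * (FreeGroup.of 5)⁻¹,
   FreeGroup.of 3 * FreeGroup.of 7 * (FreeGroup.of 3)⁻¹ * (FreeGroup.of 6)⁻¹,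
   FreeGroup.of 4 * FreeGroup.of 7 * (FreeGroup.of 4)⁻¹ * (FreeGroup.of 8)⁻¹,
   FreeGroup.of 5 * FreeGroup.of 9 * (FreeGroup.of 5)⁻¹ * (FreeGroup.of 8)⁻¹,
   FreeGroup.of 7 * FreeGroup.of 9 * (FreeGroup.of 7)⁻¹ * (FreeGroup.of 10)⁻¹}

/-- The knot group of `11n_148`, as a presented group. -/
abbrev SourceGroup : Type := PresentedGroup sourceRels

/-- The prescribed images of the generators `x₁, …, x₁₁`. -/
def f : Fin 11 → TargetGroup :=
  ![y 0,
   (y 1)⁻¹ * y 0 * y 1,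
   y 3,
   y 4,
   y 3,
   y 3,
   y 2,
   y 1,
   (y 1)⁻¹ * y 2 * y 1,
   y 1,
   y 1]

end Stmt13

namespace Stmt13

lemma rel_da : y 3 * y 0 = y 1 * y 3 := by
  have h : PresentedGroup.mk targetRels _ = 1 :=
    PresentedGroup.one_of_mem (Set.mem_insert _ _)
  simp only [map_mul, map_inv] at h
  exact mul_inv_eq_iff_eq_mul.mp (mul_inv_eq_one.mp h)

lemma rel_eb : y 4 * y 1 = y 2 * y 4 := by
  have h : PresentedGroup.mk targetRels _ = 1 :=
    PresentedGroup.one_of_mem (.inr (.inl rfl))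
  simp only [map_mul, map_inv] at h
  exact mul_inv_eq_iff_eq_mul.mp (mul_inv_eq_one.mp h)

lemma rel_ac : y 0 * y 2 = y 3 * y 0 := by
  have h : PresentedGroup.mk targetRels _ = 1 :=
    PresentedGroup.one_of_mem (.inr (.inr (.inl rfl)))
  simp only [map_mul, map_inv] at h
  exact mul_inv_eq_iff_eq_mul.mp (mul_inv_eq_one.mp h)

lemma rel_bd : y 1 * y 3 = y 4 * y 1 := by
  have h : PresentedGroup.mk targetRels _ = 1 :=
    PresentedGroup.one_of_mem (.inr (.inr (.inr rfl)))
  simp only [map_mul, map_inv] at h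
  exact mul_inv_eq_iff_eq_mul.mp (mul_inv_eq_one.mp h)

/-- The relation `c P = P b`, where `P = b d = e b = c e`. -/
lemma rel_cbd : y 2 * y 1 * y 3 = y 1 * y 3 * y 1 := by
  rw [mul_assoc, rel_bd, ← mul_assoc, ← rel_eb]

lemma lift_f_eq_one : ∀ r ∈ sourceRels, FreeGroup.lift f r = 1 := by
  have f0 : f 0 = y 0 := rfl
  have f1 : f 1 = (y 1)⁻¹ * y 0 * y 1 := rfl
  have f2 : f 2 = y 3 := rfl
  have f3 : f 3 = y 4 := rfl
  have f4 : f 4 = y 3 := rfl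
  have f5 : f 5 = y 3 := rfl
  have f6 : f 6 = y 2 := rfl
  have f7 : f 7 = y 1 := rfl
  have f8 : f 8 = (y 1)⁻¹ * y 2 * y 1 := rfl
  have f9 : f 9 = y 1 := rfl
  have f10 : f 10 = y 1 := rfl
  -- `rel_cbd` rearranged: the image `d b d⁻¹` of `x₅ x₈ x₅⁻¹` is `b⁻¹ c b`, the image of `x₉`.
  have hdb : y 3 * y 1 = (y 1)⁻¹ * y 2 * y 1 * y 3 := by
    rw [mul_assoc, mul_assoc, eq_inv_mul_iff_mul_eq, ← mul_assoc, ← mul_assoc, rel_cbd]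
  rintro r (rfl | rfl | rfl | rfl | rfl | rfl | rfl | rfl | rfl | rfl) <;>
    simp only [map_mul, map_inv, FreeGroup.lift_apply_of, f0, f1, f2, f3, f4, f5, f6, f7, f8, f9,
      f10, one_mul, mul_inv_eq_iff_eq_mul]
  · group
  -- Both sides equal `d b`, since `a c = b d`.
  · rw [← hdb]
    calc y 3 * y 1 = (y 1)⁻¹ * (y 1 * y 3) * y 1 := by group
      _ = (y 1)⁻¹ * y 0 * y 1 * ((y 1)⁻¹ * y 2 * y 1) := by
        rw [← rel_da, ← rel_ac]; group
  · exact rel_bd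
  · exact rel_bd
  · exact rel_ac
  · exact rel_eb
  · exact hdb
  · exact hdb

end Stmt13

open Stmt13 in
theorem stmt13 :
    (∀ r ∈ sourceRels, FreeGroup.lift f r = 1) ∧
    ∃ φ : SourceGroup →* TargetGroup,
      (∀ j : Fin 11, φ (PresentedGroup.of j) = f j) ∧ Function.Surjective φ := by
  refine ⟨lift_f_eq_one, PresentedGroup.toGroup lift_f_eq_one,
    fun j => PresentedGroup.toGroup.of lift_f_eq_one, ?_⟩
  rw [← MonoidHom.range_eq_top, eq_top_iff, ← PresentedGroup.closure_range_of,
    Subgroup.closure_le]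
  rintro _ ⟨i, rfl⟩
  have key : ∀ j : Fin 11, f j ∈ (PresentedGroup.toGroup lift_f_eq_one).range :=
    fun j => ⟨PresentedGroup.of j, PresentedGroup.toGroup.of lift_f_eq_one⟩
  -- `y₁, …, y₅` are the images of `x₁, x₈, x₇, x₃, x₄`.
  fin_cases i
  · exact key 0
  · exact key 7
  · exact key 6
  · exact key 2
  · exact key 3
end

section
/- Let G be the presented group with generators x₁,…,x₁₁ and relators x₄x₂x₄⁻¹x₁⁻¹, x₁x₃x₁⁻¹x₂⁻¹, x₇x₄x₇⁻¹x₃⁻¹, x₂x₅x₂⁻¹x₄⁻¹, x₁₁x₅x₁₁⁻¹x₆⁻¹, x₉x₇x₉⁻¹x₆⁻¹, x₃x₈x₃⁻¹x₇⁻¹, x₆x₉x₆⁻¹x₈⁻¹, x₈x₁₀x₈⁻¹x₉⁻¹, x₁x₁₀x₁⁻¹x₁₁⁻¹ (a Wirtinger presentation of the knot group of 11n_71). Then the assignment x₁ ↦ y₁, x₂ ↦ y₅, x₃ ↦ y₄, x₄ ↦ y₃, x₅ ↦ y₂, x₆ ↦ y₃, x₇ ↦ y₂, x₈ ↦ y₁,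 x₉ ↦ y₅, x₁₀ ↦ y₄, x₁₁ ↦ y₅ sends every relator of G to the identity of G(5₂), hence induces a group homomorphism G → G(5₂), and this homomorphism is surjective. -/
/-!
Write `a, …, e` for `y₁, …, y₅`. Up to repetition, the images of the source relators are the four
relators of `G(5₂)` and the one further word `c e c⁻¹ a⁻¹`, which is the relator of the fifth
crossing of the `5₂` diagram. As for every Wirtinger presentation, this last relator follows from
the others (`fifth_crossing`). Every `yᵢ` is the image of some `xⱼ`, so the induced
homomorphism is surjective.
-/

/-!
Statement 14: the assignment given in the paper sends every relator of the
Wirtinger presentation of the knot group of `11n_71` to the identity of the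
knot group G(5_2), hence induces a group homomorphism, and this homomorphism
is surjective.

Generators are indexed by `Fin`, with `xⱼ` corresponding to index `j - 1`
(and similarly `yⱼ` to `j - 1`).
-/

namespace Stmt14

/-- Relators of the knot group G(5_2). -/
def targetRels : Set (FreeGroup (Fin 5)) :=
  {FreeGroup.of 3 * FreeGroup.of 0 * (FreeGroup.of 3)⁻¹ * (FreeGroup.of 1)⁻¹,
   FreeGroup.of 4 * FreeGroup.of 1 * (FreeGroup.of 4)⁻¹ * (FreeGroup.of 2)⁻¹,
   FreeGroup.of 1 * FreeGroup.of 2 * (FreeGroup.of 1)⁻¹ * (FreeGroup.of 3)⁻¹,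
   FreeGroup.of 0 * FreeGroup.of 3 * (FreeGroup.of 0)⁻¹ * (FreeGroup.of 4)⁻¹}

/-- The knot group G(5_2), as a presented group. -/
abbrev TargetGroup : Type := PresentedGroup targetRels

/-- The images of the generators `y₁, …, y_5` in the target group. -/
def y : Fin 5 → TargetGroup := PresentedGroup.of

/-- Relators of the Wirtinger presentation of the knot group of `11n_71`. -/
def sourceRels : Set (FreeGroup (Fin 11)) :=
  {FreeGroup.of 3 * FreeGroup.of 1 * (FreeGroup.of 3)⁻¹ * (FreeGroup.of 0)⁻¹,
   FreeGroup.of 0 * FreeGroup.of 2 * (FreeGroup.of 0)⁻¹ * (FreeGroup.of 1)⁻¹,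
   FreeGroup.of 6 * FreeGroup.of 3 * (FreeGroup.of 6)⁻¹ * (FreeGroup.of 2)⁻¹,
   FreeGroup.of 1 * FreeGroup.of 4 * (FreeGroup.of 1)⁻¹ * (FreeGroup.of 3)⁻¹,
   FreeGroup.of 10 * FreeGroup.of 4 * (FreeGroup.of 10)⁻¹ * (FreeGroup.of 5)⁻¹,
   FreeGroup.of 8 * FreeGroup.of 6 * (FreeGroup.of 8)⁻¹ * (FreeGroup.of 5)⁻¹,
   FreeGroup.of 2 * FreeGroup.of 7 * (FreeGroup.of 2)⁻¹ * (FreeGroup.of 6)⁻¹,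
   FreeGroup.of 5 * FreeGroup.of 8 * (FreeGroup.of 5)⁻¹ * (FreeGroup.of 7)⁻¹,
   FreeGroup.of 7 * FreeGroup.of 9 * (FreeGroup.of 7)⁻¹ * (FreeGroup.of 8)⁻¹,
   FreeGroup.of 0 * FreeGroup.of 9 * (FreeGroup.of 0)⁻¹ * (FreeGroup.of 10)⁻¹}

/-- The knot group of `11n_71`, as a presented group. -/
abbrev SourceGroup : Type := PresentedGroup sourceRels

/-- The prescribed images of the generators `x₁, …, x₁₁`. -/
def f : Fin 11 → TargetGroup :=
  ![y 0,
   y 4,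
   y 3,
   y 2,
   y 1,
   y 2,
   y 1,
   y 0,
   y 4,
   y 3,
   y 4]

end Stmt14

namespace Stmt14

/-- The relation at the fifth crossing of the `5₂` diagram follows from the other four. -/
theorem fifth_crossing {G : Type*} [Group G] {a b c d e : G}
    (h₁ : d * a * d⁻¹ * b⁻¹ = 1) (h₂ : e * b * e⁻¹ * c⁻¹ = 1)
    (h₃ : b * c * b⁻¹ * d⁻¹ = 1) (h₄ : a * d * a⁻¹ * e⁻¹ = 1) :
    c * e * c⁻¹ * a⁻¹ = 1 := by
  rw [mul_inv_eq_one, mul_inv_eq_iff_eq_mul] at *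
  have hc : c = d * a⁻¹ * b := by
    apply mul_left_cancel (a := b)
    rw [h₃, ← mul_assoc, ← mul_assoc, ← h₁, mul_inv_cancel_right]
  calc c * e = e * b := h₂.symm
    _ = a * d * a⁻¹ * b := by rw [h₄, mul_inv_cancel_right]
    _ = a * (d * a⁻¹ * b) := by simp only [mul_assoc]
    _ = a * c := by rw [← hc]

theorem lift_y_eq_one {r : FreeGroup (Fin 5)} (hr : r ∈ targetRels) :
    FreeGroup.lift y r = 1 := by
  have h : FreeGroup.lift y = PresentedGroup.mk targetRels := by
    ext i
    simp [y, PresentedGroup.of]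
  rw [h]
  exact PresentedGroup.one_of_mem hr

theorem lift_f_eq_one : ∀ r ∈ sourceRels, FreeGroup.lift f r = 1 := by
  have h₁ : y 3 * y 0 * (y 3)⁻¹ * (y 1)⁻¹ = 1 := by
    simpa only [map_mul, map_inv, FreeGroup.lift_apply_of] using
      lift_y_eq_one (.inl rfl)
  have h₂ : y 4 * y 1 * (y 4)⁻¹ * (y 2)⁻¹ = 1 := by
    simpa only [map_mul, map_inv, FreeGroup.lift_apply_of] using
      lift_y_eq_one (.inr (.inl rfl))
  have h₃ : y 1 * y 2 * (y 1)⁻¹ * (y 3)⁻¹ = 1 := by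
    simpa only [map_mul, map_inv, FreeGroup.lift_apply_of] using
      lift_y_eq_one (.inr (.inr (.inl rfl)))
  have h₄ : y 0 * y 3 * (y 0)⁻¹ * (y 4)⁻¹ = 1 := by
    simpa only [map_mul, map_inv, FreeGroup.lift_apply_of] using
      lift_y_eq_one (.inr (.inr (.inr rfl)))
  have h₅ : y 2 * y 4 * (y 2)⁻¹ * (y 0)⁻¹ = 1 := fifth_crossing h₁ h₂ h₃ h₄
  rintro r (rfl | rfl | rfl | rfl | rfl | rfl | rfl | rfl | rfl | rfl) <;>
    simp only [map_mul, map_inv, FreeGroup.lift_apply_of] <;>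
    first | exact h₁ | exact h₂ | exact h₃ | exact h₄ | exact h₅

theorem exists_f_eq_y (i : Fin 5) : ∃ j : Fin 11, f j = y i := by
  fin_cases i
  exacts [⟨0, rfl⟩, ⟨4, rfl⟩, ⟨3, rfl⟩, ⟨2, rfl⟩, ⟨1, rfl⟩]

end Stmt14

open Stmt14 in
theorem stmt14 :
    (∀ r ∈ sourceRels, FreeGroup.lift f r = 1) ∧
    ∃ φ : SourceGroup →* TargetGroup,
      (∀ j : Fin 11, φ (PresentedGroup.of j) = f j) ∧ Function.Surjective φ := by
  refine ⟨lift_f_eq_one, PresentedGroup.toGroup lift_f_eq_one,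
    fun j => PresentedGroup.toGroup.of lift_f_eq_one, ?_⟩
  rw [← MonoidHom.range_eq_top, eq_top_iff, ← PresentedGroup.closure_range_of targetRels,
    Subgroup.closure_le]
  rintro _ ⟨i, rfl⟩
  obtain ⟨j, hj⟩ := exists_f_eq_y i
  exact ⟨PresentedGroup.of j, (PresentedGroup.toGroup.of lift_f_eq_one).trans hj⟩
end

section
/- Let G be the presented group with generators x₁,…,x₁₁ and relators x₇x₂x₇⁻¹x₁⁻¹, x₅x₃x₅⁻¹x₂⁻¹, x₁x₄x₁⁻¹x₃⁻¹, x₁₁x₄x₁₁⁻¹x₅⁻¹, x₁₀x₆x₁₀⁻¹x₅⁻¹, x₁x₇x₁⁻¹x₆⁻¹, x₂x₈x₂⁻¹x₇⁻¹, x₄x₉x₄⁻¹x₈⁻¹, x₃x₉x₃⁻¹x₁₀⁻¹, x₂x₁₁x₂⁻¹x₁₀⁻¹ (a Wirtinger presentation of the knot group of 11n_185). Then the assignment x₁ ↦ y₁, x₂ ↦ y₅, x₃ ↦ y₅, x₄ ↦ y₄, x₅ ↦ y₅, x₆ ↦ y₁y₃y₁⁻¹, x₇ ↦ y₃, x₈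 ↦ y₂, x₉ ↦ y₁, x₁₀ ↦ y₁y₂y₁⁻¹, x₁₁ ↦ y₁ sends every relator of G to the identity of G(5₂), hence induces a group homomorphism G → G(5₂), and this homomorphism is surjective. -/
/-!
Write `a, b, c, d, e` for `y₁, …, y₅`. After substitution, nine of the ten relators follow at once
from the four defining relations `d a d⁻¹ = b`, `e b e⁻¹ = c`, `b c b⁻¹ = d`, `a d a⁻¹ = e` of
G(5₂). The first relator becomes `c e c⁻¹ = a`, the Wirtinger relation at the fifth crossing of
5₂, which is omitted from the presentation because it follows from the other four
(`wirtinger_fifth`). Surjectivity holds because the generators `y₁, y₅, y₄, y₃, y₂` are the images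
of `x₁, x₂, x₄, x₇, x₈`.
-/

/-!
Statement 15: the assignment given in the paper sends every relator of the
Wirtinger presentation of the knot group of `11n_185` to the identity of the
knot group G(5_2), hence induces a group homomorphism, and this homomorphism
is surjective.

Generators are indexed by `Fin`, with `xⱼ` corresponding to index `j - 1`
(and similarly `yⱼ` to `j - 1`).
-/

namespace Stmt15

/-- Relators of the knot group G(5_2). -/
def targetRels : Set (FreeGroup (Fin 5)) :=
  {FreeGroup.of 3 * FreeGroup.of 0 * (FreeGroup.of 3)⁻¹ * (FreeGroup.of 1)⁻¹,
   FreeGroup.of 4 * FreeGroup.of 1 * (FreeGroup.of 4)⁻¹ * (FreeGroup.of 2)⁻¹,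
   FreeGroup.of 1 * FreeGroup.of 2 * (FreeGroup.of 1)⁻¹ * (FreeGroup.of 3)⁻¹,
   FreeGroup.of 0 * FreeGroup.of 3 * (FreeGroup.of 0)⁻¹ * (FreeGroup.of 4)⁻¹}

/-- The knot group G(5_2), as a presented group. -/
abbrev TargetGroup : Type := PresentedGroup targetRels

/-- The images of the generators `y₁, …, y_5` in the target group. -/
def y : Fin 5 → TargetGroup := PresentedGroup.of

/-- Relators of the Wirtinger presentation of the knot group of `11n_185`. -/
def sourceRels : Set (FreeGroup (Fin 11)) :=
  {FreeGroup.of 6 * FreeGroup.of 1 * (FreeGroup.of 6)⁻¹ * (FreeGroup.of 0)⁻¹,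
   FreeGroup.of 4 * FreeGroup.of 2 * (FreeGroup.of 4)⁻¹ * (FreeGroup.of 1)⁻¹,
   FreeGroup.of 0 * FreeGroup.of 3 * (FreeGroup.of 0)⁻¹ * (FreeGroup.of 2)⁻¹,
   FreeGroup.of 10 * FreeGroup.of 3 * (FreeGroup.of 10)⁻¹ * (FreeGroup.of 4)⁻¹,
   FreeGroup.of 9 * FreeGroup.of 5 * (FreeGroup.of 9)⁻¹ * (FreeGroup.of 4)⁻¹,
   FreeGroup.of 0 * FreeGroup.of 6 * (FreeGroup.of 0)⁻¹ * (FreeGroup.of 5)⁻¹,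
   FreeGroup.of 1 * FreeGroup.of 7 * (FreeGroup.of 1)⁻¹ * (FreeGroup.of 6)⁻¹,
   FreeGroup.of 3 * FreeGroup.of 8 * (FreeGroup.of 3)⁻¹ * (FreeGroup.of 7)⁻¹,
   FreeGroup.of 2 * FreeGroup.of 8 * (FreeGroup.of 2)⁻¹ * (FreeGroup.of 9)⁻¹,
   FreeGroup.of 1 * FreeGroup.of 10 * (FreeGroup.of 1)⁻¹ * (FreeGroup.of 9)⁻¹}

/-- The knot group of `11n_185`, as a presented group. -/
abbrev SourceGroup : Type := PresentedGroup sourceRels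

/-- The prescribed images of the generators `x₁, …, x₁₁`. -/
def f : Fin 11 → TargetGroup :=
  ![y 0,
   y 4,
   y 4,
   y 3,
   y 4,
   y 0 * y 2 * (y 0)⁻¹,
   y 2,
   y 1,
   y 0,
   y 0 * y 1 * (y 0)⁻¹,
   y 0]

end Stmt15

namespace Stmt15

lemma y_rel_0 : y 3 * y 0 * (y 3)⁻¹ = y 1 :=
  mul_inv_eq_one.mp (PresentedGroup.one_of_mem (rels := targetRels) (by simp [targetRels]))

lemma y_rel_1 : y 4 * y 1 * (y 4)⁻¹ = y 2 :=
  mul_inv_eq_one.mp (PresentedGroup.one_of_mem (rels := targetRels) (by simp [targetRels]))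

lemma y_rel_2 : y 1 * y 2 * (y 1)⁻¹ = y 3 :=
  mul_inv_eq_one.mp (PresentedGroup.one_of_mem (rels := targetRels) (by simp [targetRels]))

lemma y_rel_3 : y 0 * y 3 * (y 0)⁻¹ = y 4 :=
  mul_inv_eq_one.mp (PresentedGroup.one_of_mem (rels := targetRels) (by simp [targetRels]))

/-- The Wirtinger relation at the fifth crossing of 5₂ is a consequence of the other four.
Eliminating `d = a⁻¹ e a` gives `b = a⁻¹ e a e⁻¹ a`, and with `c = e b e⁻¹` the relation
`b c = d b` becomes `a e⁻¹ a e b = e a e⁻¹ a e`; multiplying by `e a⁻¹` on the left gives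
`a e b = e b e`, which is the claim. -/
lemma wirtinger_fifth {G : Type*} [Group G] {a b c d e : G} (h₀ : d * a * d⁻¹ = b)
    (h₁ : e * b * e⁻¹ = c) (h₂ : b * c * b⁻¹ = d) (h₃ : a * d * a⁻¹ = e) :
    c * e * c⁻¹ = a := by
  have hd : d = a⁻¹ * e * a := by rw [← h₃]; group
  have hb : b = a⁻¹ * e * a * e⁻¹ * a := by rw [← h₀, hd]; group
  have hbc : b * c = d * b := by rw [← h₂]; group
  have key : a * e⁻¹ * a * e * b = e * a * e⁻¹ * a * e := by
    calc a * e⁻¹ * a * e * b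
        = e⁻¹ * a * (a⁻¹ * e * a * e⁻¹ * a * (e * b * e⁻¹)) * e := by group
      _ = e⁻¹ * a * (d * b) * e := by rw [← hb, h₁, hbc]
      _ = e * a * e⁻¹ * a * e := by rw [hb, hd]; group
  have hebe : a * e * b = e * b * e := by
    calc a * e * b = e * a⁻¹ * (a * e⁻¹ * a * e * b) := by group
      _ = e * (a⁻¹ * e * a * e⁻¹ * a) * e := by rw [key]; group
      _ = e * b * e := by rw [← hb]
  calc c * e * c⁻¹ = e * b * e * (e * b)⁻¹ := by rw [← h₁]; group
    _ = a := by rw [← hebe]; group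

/-- Both of the last two source relators are sent to this relation. -/
lemma y_conj : y 4 * y 0 * (y 4)⁻¹ = y 0 * y 1 * (y 0)⁻¹ := by
  rw [← y_rel_0, ← y_rel_3]; group

lemma lift_f_sourceRels : ∀ r ∈ sourceRels, FreeGroup.lift f r = 1 := by
  have h5 : y 0 * y 1 * (y 0)⁻¹ * (y 0 * y 2 * (y 0)⁻¹) * (y 0 * y 1 * (y 0)⁻¹)⁻¹ = y 4 := by
    rw [← y_rel_3, ← y_rel_2]; group
  intro r hr
  simp only [sourceRels, Set.mem_insert_iff, Set.mem_singleton_iff] at hr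
  rcases hr with rfl | rfl | rfl | rfl | rfl | rfl | rfl | rfl | rfl | rfl <;>
    simp only [map_mul, map_inv, FreeGroup.lift_apply_of] <;> rw [mul_inv_eq_one]
  · exact wirtinger_fifth y_rel_0 y_rel_1 y_rel_2 y_rel_3
  · exact mul_inv_cancel_right (y 4) (y 4)
  · exact y_rel_3
  · exact y_rel_3
  · exact h5
  · rfl
  · exact y_rel_1
  · exact y_rel_0
  · exact y_conj
  · exact y_conj

end Stmt15

open Stmt15 in
theorem stmt15 :
    (∀ r ∈ sourceRels, FreeGroup.lift f r = 1) ∧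
    ∃ φ : SourceGroup →* TargetGroup,
      (∀ j : Fin 11, φ (PresentedGroup.of j) = f j) ∧ Function.Surjective φ := by
  refine ⟨lift_f_sourceRels, PresentedGroup.toGroup lift_f_sourceRels,
    fun j => PresentedGroup.toGroup.of lift_f_sourceRels, ?_⟩
  rw [← MonoidHom.range_eq_top, eq_top_iff, ← PresentedGroup.closure_range_of,
    Subgroup.closure_le]
  rintro _ ⟨i, rfl⟩
  have hf (j : Fin 11) : f j ∈ (PresentedGroup.toGroup lift_f_sourceRels).range :=
    ⟨PresentedGroup.of j, PresentedGroup.toGroup.of lift_f_sourceRels⟩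
  fin_cases i
  exacts [hf 0, hf 7, hf 6, hf 3, hf 1]
end

section
/- Let G be the presented group with generators x₁,…,x₁₁ and relators x₅x₂x₅⁻¹x₁⁻¹, x₁₁x₃x₁₁⁻¹x₂⁻¹, x₁₀x₃x₁₀⁻¹x₄⁻¹, x₉x₄x₉⁻¹x₅⁻¹, x₈x₆x₈⁻¹x₅⁻¹, x₃x₇x₃⁻¹x₆⁻¹, x₂x₇x₂⁻¹x₈⁻¹, x₁x₉x₁⁻¹x₈⁻¹, x₄x₉x₄⁻¹x₁₀⁻¹, x₇x₁₁x₇⁻¹x₁₀⁻¹ (a Wirtinger presentation of the knot group of 11a_352). Then the assignment x₁ ↦ y₁, x₂ ↦ y₂, x₃ ↦ y₂, x₄ ↦ y₃, x₅ ↦ y₄, x₆ ↦ y₄, x₇ ↦ y₂⁻¹y₁y₄, x₈ ↦ y₄, x₉ ↦ y₅, x₁₀ ↦ y₆, x₁₁ ↦ y₂ sends every relator of G to the identity of G(6₁), hence induces a group homomorphism G → G(6₁), and this homomorphism is surjective. -/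
/-!
Nine of the ten relators of the source map either to a trivial word or to a Wirtinger relation
of the given presentation of G(6₁), using `y₁y₄ = y₄y₂` for the two that involve the image
`y₂⁻¹y₁y₄` of `x₇`. The last one, `x₇x₁₁x₇⁻¹x₁₀⁻¹`, amounts to `y₂y₆ = y₁y₂`, the Wirtinger
relation at the crossing omitted from the presentation of G(6₁); it follows from the other five
(`sixth_relation`). Surjectivity holds because every `yᵢ` is the image of some generator `xⱼ`.
-/


/-!
Statement 16: the assignment given in the paper sends every relator of the
Wirtinger presentation of the knot group of `11a_352` to the identity of the
knot group G(6_1), hence induces a group homomorphism, and this homomorphism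
is surjective.

Generators are indexed by `Fin`, with `xⱼ` corresponding to index `j - 1`
(and similarly `yⱼ` to `j - 1`).
-/

namespace Stmt16

/-- Relators of the knot group G(6_1). -/
def targetRels : Set (FreeGroup (Fin 6)) :=
  {FreeGroup.of 3 * FreeGroup.of 1 * (FreeGroup.of 3)⁻¹ * (FreeGroup.of 0)⁻¹,
   FreeGroup.of 5 * FreeGroup.of 1 * (FreeGroup.of 5)⁻¹ * (FreeGroup.of 2)⁻¹,
   FreeGroup.of 4 * FreeGroup.of 2 * (FreeGroup.of 4)⁻¹ * (FreeGroup.of 3)⁻¹,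
   FreeGroup.of 0 * FreeGroup.of 4 * (FreeGroup.of 0)⁻¹ * (FreeGroup.of 3)⁻¹,
   FreeGroup.of 2 * FreeGroup.of 4 * (FreeGroup.of 2)⁻¹ * (FreeGroup.of 5)⁻¹}

/-- The knot group G(6_1), as a presented group. -/
abbrev TargetGroup : Type := PresentedGroup targetRels

/-- The images of the generators `y₁, …, y_6` in the target group. -/
def y : Fin 6 → TargetGroup := PresentedGroup.of

/-- Relators of the Wirtinger presentation of the knot group of `11a_352`. -/
def sourceRels : Set (FreeGroup (Fin 11)) :=
  {FreeGroup.of 4 * FreeGroup.of 1 * (FreeGroup.of 4)⁻¹ * (FreeGroup.of 0)⁻¹,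
   FreeGroup.of 10 * FreeGroup.of 2 * (FreeGroup.of 10)⁻¹ * (FreeGroup.of 1)⁻¹,
   FreeGroup.of 9 * FreeGroup.of 2 * (FreeGroup.of 9)⁻¹ * (FreeGroup.of 3)⁻¹,
   FreeGroup.of 8 * FreeGroup.of 3 * (FreeGroup.of 8)⁻¹ * (FreeGroup.of 4)⁻¹,
   FreeGroup.of 7 * FreeGroup.of 5 * (FreeGroup.of 7)⁻¹ * (FreeGroup.of 4)⁻¹,
   FreeGroup.of 2 * FreeGroup.of 6 * (FreeGroup.of 2)⁻¹ * (FreeGroup.of 5)⁻¹,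
   FreeGroup.of 1 * FreeGroup.of 6 * (FreeGroup.of 1)⁻¹ * (FreeGroup.of 7)⁻¹,
   FreeGroup.of 0 * FreeGroup.of 8 * (FreeGroup.of 0)⁻¹ * (FreeGroup.of 7)⁻¹,
   FreeGroup.of 3 * FreeGroup.of 8 * (FreeGroup.of 3)⁻¹ * (FreeGroup.of 9)⁻¹,
   FreeGroup.of 6 * FreeGroup.of 10 * (FreeGroup.of 6)⁻¹ * (FreeGroup.of 9)⁻¹}

/-- The knot group of `11a_352`, as a presented group. -/
abbrev SourceGroup : Type := PresentedGroup sourceRels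

/-- The prescribed images of the generators `x₁, …, x₁₁`. -/
def f : Fin 11 → TargetGroup :=
  ![y 0,
   y 1,
   y 1,
   y 2,
   y 3,
   y 3,
   (y 1)⁻¹ * y 0 * y 3,
   y 3,
   y 4,
   y 5,
   y 1]

end Stmt16

namespace Stmt16

/-- A relator `a b a⁻¹ c⁻¹` of G(6₁), read as the commutation rule `a b = c a`. -/
lemma y_rel {a b c : Fin 6}
    (h : FreeGroup.of a * FreeGroup.of b * (FreeGroup.of a)⁻¹ * (FreeGroup.of c)⁻¹ ∈ targetRels) :
    y a * y b = y c * y a := by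
  have h1 : y a * y b * (y a)⁻¹ * (y c)⁻¹ = 1 := PresentedGroup.one_of_mem h
  rwa [mul_inv_eq_one, mul_inv_eq_iff_eq_mul] at h1

/-- The five defining relations of G(6₁) imply the Wirtinger relation `y₂y₆ = y₁y₂` at the
remaining crossing. -/
lemma sixth_relation {G : Type*} [Group G] {y₁ y₂ y₃ y₄ y₅ y₆ : G}
    (h₁ : y₄ * y₂ = y₁ * y₄) (h₂ : y₆ * y₂ = y₃ * y₆) (h₃ : y₅ * y₃ = y₄ * y₅)
    (h₄ : y₁ * y₅ = y₄ * y₁) (h₅ : y₃ * y₅ = y₆ * y₃) : y₂ * y₆ = y₁ * y₂ := by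
  have e₂ : y₂ = y₆⁻¹ * y₃ * y₆ := by rw [mul_assoc, ← h₂]; group
  have e₅ : y₆⁻¹ * y₃ = y₃ * y₅⁻¹ := by
    rw [inv_mul_eq_iff_eq_mul, ← mul_assoc, ← h₅]; group
  have key : y₅ * y₂ = y₄ * y₆ := by
    rw [e₂, e₅, ← mul_assoc, ← mul_assoc, h₃]; group
  have e₁ : y₄ * y₂ * y₄⁻¹ = y₁ := by rw [h₁]; group
  calc y₂ * y₆ = y₄⁻¹ * (y₄ * y₂ * y₄⁻¹) * (y₄ * y₆) := by group
    _ = y₄⁻¹ * (y₁ * y₅) * y₂ := by rw [e₁, ← key]; group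
    _ = y₁ * y₂ := by rw [h₄]; group

lemma lift_f_eq_one : ∀ r ∈ sourceRels, FreeGroup.lift f r = 1 := by
  have h₁ : y 3 * y 1 = y 0 * y 3 := y_rel (by simp [targetRels])
  have h₂ : y 5 * y 1 = y 2 * y 5 := y_rel (by simp [targetRels])
  have h₃ : y 4 * y 2 = y 3 * y 4 := y_rel (by simp [targetRels])
  have h₄ : y 0 * y 4 = y 3 * y 0 := y_rel (by simp [targetRels])
  have h₅ : y 2 * y 4 = y 5 * y 2 := y_rel (by simp [targetRels])
  have h₆ : y 1 * y 5 = y 0 * y 1 := sixth_relation h₁ h₂ h₃ h₄ h₅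
  -- The image of `x₇` is also `y₂⁻¹y₄y₂`.
  have h₇ : (y 1)⁻¹ * y 0 * y 3 = (y 1)⁻¹ * y 3 * y 1 := by
    rw [mul_assoc, ← h₁, mul_assoc]
  have h₈ : y 1 * ((y 1)⁻¹ * y 0 * y 3) = y 3 * y 1 := by rw [h₇]; group
  have h₉ : (y 1)⁻¹ * y 0 * y 3 * y 1 = y 5 * ((y 1)⁻¹ * y 0 * y 3) := by
    have e : y 5 = (y 1)⁻¹ * y 0 * y 1 := by rw [mul_assoc, ← h₆]; group
    calc (y 1)⁻¹ * y 0 * y 3 * y 1 = (y 1)⁻¹ * y 0 * (y 3 * y 1) := by group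
      _ = y 5 * ((y 1)⁻¹ * y 0 * y 3) := by rw [h₁, e]; group
  intro r hr
  simp only [sourceRels, Set.mem_insert_iff, Set.mem_singleton_iff] at hr
  rcases hr with rfl | rfl | rfl | rfl | rfl | rfl | rfl | rfl | rfl | rfl <;>
    simp only [map_mul, map_inv, FreeGroup.lift_apply_of,
      mul_inv_eq_iff_eq_mul, one_mul]
  exacts [h₁, rfl, h₂, h₃, rfl, h₈, h₈, h₄, h₅, h₉]

end Stmt16

open Stmt16 in
theorem stmt16 :
    (∀ r ∈ sourceRels, FreeGroup.lift f r = 1) ∧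
    ∃ φ : SourceGroup →* TargetGroup,
      (∀ j : Fin 11, φ (PresentedGroup.of j) = f j) ∧ Function.Surjective φ := by
  refine ⟨lift_f_eq_one, PresentedGroup.toGroup lift_f_eq_one,
    fun j => PresentedGroup.toGroup.of lift_f_eq_one, ?_⟩
  rw [← MonoidHom.range_eq_top, eq_top_iff, ← PresentedGroup.closure_range_of,
    Subgroup.closure_le]
  -- Preimages of `y₁, …, y₆` among the generators of the source.
  have hs : ∀ i : Fin 6, f (![0, 1, 3, 4, 8, 9] i) = y i := by
    intro i
    fin_cases i <;> rfl
  rintro _ ⟨i, rfl⟩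
  exact ⟨PresentedGroup.of (![0, 1, 3, 4, 8, 9] i),
    (PresentedGroup.toGroup.of lift_f_eq_one).trans (hs i)⟩
end

section
/- Let G be the presented group with generators x₁,…,x₁₁ and relators x₅x₂x₅⁻¹x₁⁻¹, x₁₁x₃x₁₁⁻¹x₂⁻¹, x₉x₃x₉⁻¹x₄⁻¹, x₁₀x₄x₁₀⁻¹x₅⁻¹, x₈x₆x₈⁻¹x₅⁻¹, x₃x₇x₃⁻¹x₆⁻¹, x₂x₇x₂⁻¹x₈⁻¹, x₁x₉x₁⁻¹x₈⁻¹, x₄x₉x₄⁻¹x₁₀⁻¹, x₇x₁₁x₇⁻¹x₁₀⁻¹ (a Wirtinger presentation of the knot group of 11a_351). Then the assignment x₁ ↦ y₁, x₂ ↦ y₂, x₃ ↦ y₂, x₄ ↦ y₃, x₅ ↦ y₄, x₆ ↦ y₄, x₇ ↦ y₂⁻¹y₁y₄, x₈ ↦ y₄, x₉ ↦ y₅, x₁₀ ↦ y₆, x₁₁ ↦ y₂ sends every relator of G to the identity of G(6₂), hence induces a group homomorphism G → G(6₂), and this homomorphism is surjective. -/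
/-!
Write the relators of `G(6₂)` as `y₄y₂ = y₁y₄`, `y₅y₂ = y₃y₅`, `y₆y₃ = y₄y₆`, `y₁y₅ = y₄y₁`,
`y₃y₅ = y₆y₃`. Nine of the ten relators of the source group map either to one of these, to a
trivial commutator, or, for those conjugating `x₇` to `x₆` or `x₈`, to
`y₁y₄y₂⁻¹y₄⁻¹ = 1`. The last one maps to
`(y₂⁻¹y₁y₂)y₆⁻¹`, whose triviality is the sixth Wirtinger relation `y₂y₆ = y₁y₂` omitted from the
presentation (`Stmt17.omitted_relation`). Surjectivity holds because every `yᵢ` is the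
prescribed image of some `xⱼ`.
-/

/-!
Statement 17: the assignment given in the paper sends every relator of the
Wirtinger presentation of the knot group of `11a_351` to the identity of the
knot group G(6_2), hence induces a group homomorphism, and this homomorphism
is surjective.

Generators are indexed by `Fin`, with `xⱼ` corresponding to index `j - 1`
(and similarly `yⱼ` to `j - 1`).
-/

namespace Stmt17

/-- Relators of the knot group G(6_2). -/
def targetRels : Set (FreeGroup (Fin 6)) :=
  {FreeGroup.of 3 * FreeGroup.of 1 * (FreeGroup.of 3)⁻¹ * (FreeGroup.of 0)⁻¹,
   FreeGroup.of 4 * FreeGroup.of 1 * (FreeGroup.of 4)⁻¹ * (FreeGroup.of 2)⁻¹,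
   FreeGroup.of 5 * FreeGroup.of 2 * (FreeGroup.of 5)⁻¹ * (FreeGroup.of 3)⁻¹,
   FreeGroup.of 0 * FreeGroup.of 4 * (FreeGroup.of 0)⁻¹ * (FreeGroup.of 3)⁻¹,
   FreeGroup.of 2 * FreeGroup.of 4 * (FreeGroup.of 2)⁻¹ * (FreeGroup.of 5)⁻¹}

/-- The knot group G(6_2), as a presented group. -/
abbrev TargetGroup : Type := PresentedGroup targetRels

/-- The images of the generators `y₁, …, y_6` in the target group. -/
def y : Fin 6 → TargetGroup := PresentedGroup.of

/-- Relators of the Wirtinger presentation of the knot group of `11a_351`. -/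
def sourceRels : Set (FreeGroup (Fin 11)) :=
  {FreeGroup.of 4 * FreeGroup.of 1 * (FreeGroup.of 4)⁻¹ * (FreeGroup.of 0)⁻¹,
   FreeGroup.of 10 * FreeGroup.of 2 * (FreeGroup.of 10)⁻¹ * (FreeGroup.of 1)⁻¹,
   FreeGroup.of 8 * FreeGroup.of 2 * (FreeGroup.of 8)⁻¹ * (FreeGroup.of 3)⁻¹,
   FreeGroup.of 9 * FreeGroup.of 3 * (FreeGroup.of 9)⁻¹ * (FreeGroup.of 4)⁻¹,
   FreeGroup.of 7 * FreeGroup.of 5 * (FreeGroup.of 7)⁻¹ * (FreeGroup.of 4)⁻¹,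
   FreeGroup.of 2 * FreeGroup.of 6 * (FreeGroup.of 2)⁻¹ * (FreeGroup.of 5)⁻¹,
   FreeGroup.of 1 * FreeGroup.of 6 * (FreeGroup.of 1)⁻¹ * (FreeGroup.of 7)⁻¹,
   FreeGroup.of 0 * FreeGroup.of 8 * (FreeGroup.of 0)⁻¹ * (FreeGroup.of 7)⁻¹,
   FreeGroup.of 3 * FreeGroup.of 8 * (FreeGroup.of 3)⁻¹ * (FreeGroup.of 9)⁻¹,
   FreeGroup.of 6 * FreeGroup.of 10 * (FreeGroup.of 6)⁻¹ * (FreeGroup.of 9)⁻¹}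

/-- The knot group of `11a_351`, as a presented group. -/
abbrev SourceGroup : Type := PresentedGroup sourceRels

/-- The prescribed images of the generators `x₁, …, x₁₁`. -/
def f : Fin 11 → TargetGroup :=
  ![y 0,
   y 1,
   y 1,
   y 2,
   y 3,
   y 3,
   (y 1)⁻¹ * y 0 * y 3,
   y 3,
   y 4,
   y 5,
   y 1]

end Stmt17

namespace Stmt17

/-- The redundant sixth Wirtinger relation follows from the other five: they give
`y₅y₂ = y₃y₅ = y₆y₃ = y₄y₆`, so `y₄y₁y₂ = y₁y₅y₂ = y₁y₄y₆ = y₄y₂y₆`; cancel `y₄`. -/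
lemma omitted_relation {G : Type*} [Group G] {y₁ y₂ y₃ y₄ y₅ y₆ : G}
    (h₁ : y₄ * y₂ = y₁ * y₄) (h₂ : y₅ * y₂ = y₃ * y₅) (h₃ : y₆ * y₃ = y₄ * y₆)
    (h₄ : y₁ * y₅ = y₄ * y₁) (h₅ : y₃ * y₅ = y₆ * y₃) : y₂ * y₆ = y₁ * y₂ := by
  apply mul_left_cancel (a := y₄)
  calc y₄ * (y₂ * y₆) = y₁ * (y₄ * y₆) := by rw [← mul_assoc, h₁, mul_assoc]
    _ = y₁ * (y₅ * y₂) := by rw [← h₃, ← h₅, h₂]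
    _ = y₄ * (y₁ * y₂) := by rw [← mul_assoc, h₄, mul_assoc]

/-- A relator `aba⁻¹c⁻¹` of `G(6₂)` gives the relation `ab = ca` between the generators `y`. -/
lemma y_relation {a b c : Fin 6}
    (h : FreeGroup.of a * FreeGroup.of b * (FreeGroup.of a)⁻¹ * (FreeGroup.of c)⁻¹ ∈ targetRels) :
    y a * y b = y c * y a := by
  have h' : y a * y b * (y a)⁻¹ * (y c)⁻¹ = 1 := PresentedGroup.one_of_mem h
  rwa [mul_inv_eq_one, mul_inv_eq_iff_eq_mul] at h'

lemma lift_f_eq_one : ∀ r ∈ sourceRels, FreeGroup.lift f r = 1 := by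
  have h₁ : y 3 * y 1 = y 0 * y 3 := y_relation (by simp [targetRels])
  have h₂ : y 4 * y 1 = y 2 * y 4 := y_relation (by simp [targetRels])
  have h₃ : y 5 * y 2 = y 3 * y 5 := y_relation (by simp [targetRels])
  have h₄ : y 0 * y 4 = y 3 * y 0 := y_relation (by simp [targetRels])
  have h₅ : y 2 * y 4 = y 5 * y 2 := y_relation (by simp [targetRels])
  have h₆ : y 1 * y 5 = y 0 * y 1 := omitted_relation h₁ h₂ h₃ h₄ h₅
  have h₇ : y 1 * ((y 1)⁻¹ * y 0 * y 3) = y 3 * y 1 := by rw [h₁]; group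
  have h₈ : (y 1)⁻¹ * y 0 * y 3 * y 1 = y 5 * ((y 1)⁻¹ * y 0 * y 3) := by
    have h : y 5 = (y 1)⁻¹ * y 0 * y 1 := by rw [mul_assoc, ← h₆, inv_mul_cancel_left]
    rw [h, mul_assoc, h₁]
    group
  rintro r (rfl | rfl | rfl | rfl | rfl | rfl | rfl | rfl | rfl | rfl) <;>
    simp only [map_mul, map_inv, FreeGroup.lift_apply_of] <;>
    rw [mul_inv_eq_one, mul_inv_eq_iff_eq_mul]
  exacts [h₁, rfl, h₂, h₃, rfl, h₇, h₇, h₄, h₅, h₈]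

end Stmt17

open Stmt17 in
theorem stmt17 :
    (∀ r ∈ sourceRels, FreeGroup.lift f r = 1) ∧
    ∃ φ : SourceGroup →* TargetGroup,
      (∀ j : Fin 11, φ (PresentedGroup.of j) = f j) ∧ Function.Surjective φ := by
  refine ⟨lift_f_eq_one, PresentedGroup.toGroup lift_f_eq_one,
    fun j => PresentedGroup.toGroup.of lift_f_eq_one, ?_⟩
  rw [← MonoidHom.range_eq_top, eq_top_iff, ← PresentedGroup.closure_range_of,
    Subgroup.closure_le]
  rintro _ ⟨i, rfl⟩
  -- `y₁, …, y₆` are the prescribed images of `x₁, x₂, x₄, x₅, x₉, x₁₀`.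
  refine ⟨PresentedGroup.of (![0, 1, 3, 4, 8, 9] i),
    (PresentedGroup.toGroup.of lift_f_eq_one).trans ?_⟩
  fin_cases i <;> rfl
end

section
/- Let G be the presented group with generators x₁,…,x₁₁ and relators x₄x₂x₄⁻¹x₁⁻¹, x₁x₃x₁⁻¹x₂⁻¹, x₈x₃x₈⁻¹x₄⁻¹, x₂x₅x₂⁻¹x₄⁻¹, x₁₁x₅x₁₁⁻¹x₆⁻¹, x₉x₇x₉⁻¹x₆⁻¹, x₃x₇x₃⁻¹x₈⁻¹, x₁₀x₉x₁₀⁻¹x₈⁻¹, x₇x₁₀x₇⁻¹x₉⁻¹, x₅x₁₀x₅⁻¹x₁₁⁻¹ (a Wirtinger presentation of the knot group of 11a_47). Then the assignment x₁ ↦ y₁, x₂ ↦ y₆, x₃ ↦ y₅, x₄ ↦ y₄, x₅ ↦ y₃, x₆ ↦ y₄, x₇ ↦ y₃, x₈ ↦ y₂, x₉ ↦ y₆, x₁₀ ↦ y₂y₃⁻¹y₄, x₁₁ ↦ y₆ sends every relator of G to the identity of G(6₃), hence induces a group homomorphism G → G(6₃), and this homomorphism is surjective. -/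
/-!
Write `y₁, …, y₆` for the generators of G(6₃). Six of the ten source relators, the second to the
seventh, go to defining relators of G(6₃). The first goes to the relation `y₄y₆ = y₁y₄`, the
Wirtinger relation omitted from the presentation of G(6₃), which is recovered in
`Stmt18.omitted_relation`. The images of the last three, which involve the image `y₂y₃⁻¹y₄` of
`x₁₀`, follow from it together with `y₃y₂ = y₁y₃` and `y₆y₃ = y₄y₆`.
Surjectivity holds because each `yᵢ` is itself the image of some `xⱼ`.
-/

/-!
Statement 18: the assignment given in the paper sends every relator of the
Wirtinger presentation of the knot group of `11a_47` to the identity of the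
knot group G(6_3), hence induces a group homomorphism, and this homomorphism
is surjective.

Generators are indexed by `Fin`, with `xⱼ` corresponding to index `j - 1`
(and similarly `yⱼ` to `j - 1`).
-/

namespace Stmt18

/-- Relators of the knot group G(6_3). -/
def targetRels : Set (FreeGroup (Fin 6)) :=
  {FreeGroup.of 2 * FreeGroup.of 1 * (FreeGroup.of 2)⁻¹ * (FreeGroup.of 0)⁻¹,
   FreeGroup.of 4 * FreeGroup.of 2 * (FreeGroup.of 4)⁻¹ * (FreeGroup.of 1)⁻¹,
   FreeGroup.of 5 * FreeGroup.of 2 * (FreeGroup.of 5)⁻¹ * (FreeGroup.of 3)⁻¹,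
   FreeGroup.of 1 * FreeGroup.of 4 * (FreeGroup.of 1)⁻¹ * (FreeGroup.of 3)⁻¹,
   FreeGroup.of 0 * FreeGroup.of 4 * (FreeGroup.of 0)⁻¹ * (FreeGroup.of 5)⁻¹}

/-- The knot group G(6_3), as a presented group. -/
abbrev TargetGroup : Type := PresentedGroup targetRels

/-- The images of the generators `y₁, …, y_6` in the target group. -/
def y : Fin 6 → TargetGroup := PresentedGroup.of

/-- Relators of the Wirtinger presentation of the knot group of `11a_47`. -/
def sourceRels : Set (FreeGroup (Fin 11)) :=
  {FreeGroup.of 3 * FreeGroup.of 1 * (FreeGroup.of 3)⁻¹ * (FreeGroup.of 0)⁻¹,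
   FreeGroup.of 0 * FreeGroup.of 2 * (FreeGroup.of 0)⁻¹ * (FreeGroup.of 1)⁻¹,
   FreeGroup.of 7 * FreeGroup.of 2 * (FreeGroup.of 7)⁻¹ * (FreeGroup.of 3)⁻¹,
   FreeGroup.of 1 * FreeGroup.of 4 * (FreeGroup.of 1)⁻¹ * (FreeGroup.of 3)⁻¹,
   FreeGroup.of 10 * FreeGroup.of 4 * (FreeGroup.of 10)⁻¹ * (FreeGroup.of 5)⁻¹,
   FreeGroup.of 8 * FreeGroup.of 6 * (FreeGroup.of 8)⁻¹ * (FreeGroup.of 5)⁻¹,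
   FreeGroup.of 2 * FreeGroup.of 6 * (FreeGroup.of 2)⁻¹ * (FreeGroup.of 7)⁻¹,
   FreeGroup.of 9 * FreeGroup.of 8 * (FreeGroup.of 9)⁻¹ * (FreeGroup.of 7)⁻¹,
   FreeGroup.of 6 * FreeGroup.of 9 * (FreeGroup.of 6)⁻¹ * (FreeGroup.of 8)⁻¹,
   FreeGroup.of 4 * FreeGroup.of 9 * (FreeGroup.of 4)⁻¹ * (FreeGroup.of 10)⁻¹}

/-- The knot group of `11a_47`, as a presented group. -/
abbrev SourceGroup : Type := PresentedGroup sourceRels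

/-- The prescribed images of the generators `x₁, …, x₁₁`. -/
def f : Fin 11 → TargetGroup :=
  ![y 0,
   y 5,
   y 4,
   y 3,
   y 2,
   y 3,
   y 2,
   y 1,
   y 5,
   y 1 * (y 2)⁻¹ * y 3,
   y 5]

theorem y_relations :
    y 2 * y 1 = y 0 * y 2 ∧ y 4 * y 2 = y 1 * y 4 ∧ y 5 * y 2 = y 3 * y 5 ∧
      y 1 * y 4 = y 3 * y 1 ∧ y 0 * y 4 = y 5 * y 0 := by
  have conj_rel (i j k : Fin 6)
      (h : FreeGroup.of i * FreeGroup.of j * (FreeGroup.of i)⁻¹ * (FreeGroup.of k)⁻¹ ∈ targetRels) :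
      y i * y j = y k * y i := by
    have h1 : y i * y j * (y i)⁻¹ * (y k)⁻¹ = 1 := PresentedGroup.one_of_mem h
    rw [mul_inv_eq_one, mul_inv_eq_iff_eq_mul] at h1
    exact h1
  refine ⟨conj_rel _ _ _ ?_, conj_rel _ _ _ ?_, conj_rel _ _ _ ?_, conj_rel _ _ _ ?_,
    conj_rel _ _ _ ?_⟩ <;> simp [targetRels]

/-- The sixth Wirtinger relation of 6₃ is a consequence of the other five. -/
theorem omitted_relation : y 3 * y 5 = y 0 * y 3 := by
  obtain ⟨h1, h2, h3, h4, h5⟩ := y_relations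
  have e0 : (y 0)⁻¹ * y 2 = y 2 * (y 1)⁻¹ := by
    rw [inv_mul_eq_iff_eq_mul, ← mul_assoc, ← h1, mul_inv_cancel_right]
  calc y 3 * y 5 = y 5 * y 2 := h3.symm
    _ = y 0 * y 4 * ((y 0)⁻¹ * y 2) := by rw [h5]; group
    _ = y 0 * (y 4 * y 2) * (y 1)⁻¹ := by rw [e0]; group
    _ = y 0 * (y 1 * y 4) * (y 1)⁻¹ := by rw [h2]
    _ = y 0 * y 3 := by rw [h4]; group

theorem lift_f_eq_one : ∀ r ∈ sourceRels, FreeGroup.lift f r = 1 := by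
  obtain ⟨h1, h2, h3, h4, h5⟩ := y_relations
  have h6 := omitted_relation
  have e1 : y 2 * (y 1 * (y 2)⁻¹ * y 3) = y 5 * y 2 := by
    calc y 2 * (y 1 * (y 2)⁻¹ * y 3) = y 2 * y 1 * (y 2)⁻¹ * y 3 := by group
      _ = y 5 * y 2 := by rw [h1, mul_inv_cancel_right, ← h6, h3]
  have e2 : y 1 * (y 2)⁻¹ * y 3 * y 5 = y 1 * (y 1 * (y 2)⁻¹ * y 3) := by
    have e0 : (y 2)⁻¹ * y 0 = y 1 * (y 2)⁻¹ := by
      rw [inv_mul_eq_iff_eq_mul, ← mul_assoc, h1, mul_inv_cancel_right]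
    calc y 1 * (y 2)⁻¹ * y 3 * y 5 = y 1 * ((y 2)⁻¹ * y 0) * y 3 := by
          rw [mul_assoc _ (y 3), h6]; group
      _ = y 1 * (y 1 * (y 2)⁻¹ * y 3) := by rw [e0]; group
  intro r hr
  simp only [sourceRels, Set.mem_insert_iff, Set.mem_singleton_iff] at hr
  rcases hr with rfl | rfl | rfl | rfl | rfl | rfl | rfl | rfl | rfl | rfl <;>
    simp only [map_mul, map_inv, FreeGroup.lift_apply_of, mul_inv_eq_iff_eq_mul, one_mul]
  · exact h6
  · exact h5
  · exact h4
  · exact h3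
  · exact h3
  · exact h3
  · exact h2
  · exact e2
  · exact e1
  · exact e1

end Stmt18

open Stmt18 in
theorem stmt18 :
    (∀ r ∈ sourceRels, FreeGroup.lift f r = 1) ∧
    ∃ φ : SourceGroup →* TargetGroup,
      (∀ j : Fin 11, φ (PresentedGroup.of j) = f j) ∧ Function.Surjective φ := by
  refine ⟨lift_f_eq_one, PresentedGroup.toGroup lift_f_eq_one,
    fun _ => PresentedGroup.toGroup.of lift_f_eq_one, ?_⟩
  rw [← MonoidHom.range_eq_top, eq_top_iff, ← PresentedGroup.closure_range_of targetRels,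
    Subgroup.closure_le]
  rintro _ ⟨i, rfl⟩
  -- Preimages of `y₁, …, y₆` among the source generators.
  refine ⟨PresentedGroup.of ((![0, 7, 4, 3, 2, 1] : Fin 6 → Fin 11) i), ?_⟩
  rw [PresentedGroup.toGroup.of]
  fin_cases i <;> rfl
end

section
/- Let G be the presented group with generators x₁,…,x₁₁ and relators x₇x₂x₇⁻¹x₁⁻¹, x₁x₃x₁⁻¹x₂⁻¹, x₆x₄x₆⁻¹x₃⁻¹, x₈x₄x₈⁻¹x₅⁻¹, x₉x₆x₉⁻¹x₅⁻¹, x₁₀x₆x₁₀⁻¹x₇⁻¹, x₂x₈x₂⁻¹x₇⁻¹, x₁₁x₉x₁₁⁻¹x₈⁻¹, x₃x₉x₃⁻¹x₁₀⁻¹, x₄x₁₁x₄⁻¹x₁₀⁻¹ (a Wirtinger presentation of the knot group of 11a_239). Then the assignment x₁ ↦ y₁, x₂ ↦ y₆, x₃ ↦ y₅, x₄ ↦ y₅, x₅ ↦ y₁⁻¹y₃y₅, x₆ ↦ y₅, x₇ ↦ y₄, x₈ ↦ y₃, x₉ ↦ y₃, x₁₀ ↦ y₂, x₁₁ ↦ y₃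 sends every relator of G to the identity of G(6₃), hence induces a group homomorphism G → G(6₃), and this homomorphism is surjective. -/
/-!
In `G(6₃)` the given relators say `y₃y₂ = y₁y₃`, `y₅y₃ = y₂y₅`, `y₆y₃ = y₄y₆`, `y₂y₅ = y₄y₂` and
`y₁y₅ = y₆y₁`. Under the assignment every source relator becomes trivial or one of these, with three
exceptions. The relators involving `x₅` both become `y₁y₃y₅ = y₃y₅y₃`, which holds since
`y₃y₅y₃ = y₃y₂y₅ = y₁y₃y₅`. The relator `x₇x₂x₇⁻¹x₁⁻¹` becomes the sixth, redundant, Wirtinger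
relation `y₄y₆ = y₁y₄` of the diagram of `6₃`, proved in `Stmt19.redundant`. Surjectivity is clear
because every `yᵢ` is the image of some `xⱼ`.
-/

namespace Stmt19

/-- Relators of the knot group G(6_3). -/
def targetRels : Set (FreeGroup (Fin 6)) :=
  {FreeGroup.of 2 * FreeGroup.of 1 * (FreeGroup.of 2)⁻¹ * (FreeGroup.of 0)⁻¹,
   FreeGroup.of 4 * FreeGroup.of 2 * (FreeGroup.of 4)⁻¹ * (FreeGroup.of 1)⁻¹,
   FreeGroup.of 5 * FreeGroup.of 2 * (FreeGroup.of 5)⁻¹ * (FreeGroup.of 3)⁻¹,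
   FreeGroup.of 1 * FreeGroup.of 4 * (FreeGroup.of 1)⁻¹ * (FreeGroup.of 3)⁻¹,
   FreeGroup.of 0 * FreeGroup.of 4 * (FreeGroup.of 0)⁻¹ * (FreeGroup.of 5)⁻¹}

/-- The knot group G(6_3), as a presented group. -/
abbrev TargetGroup : Type := PresentedGroup targetRels

/-- The images of the generators `y₁, …, y_6` in the target group. -/
def y : Fin 6 → TargetGroup := PresentedGroup.of

/-- Relators of the Wirtinger presentation of the knot group of `11a_239`. -/
def sourceRels : Set (FreeGroup (Fin 11)) :=
  {FreeGroup.of 6 * FreeGroup.of 1 * (FreeGroup.of 6)⁻¹ * (FreeGroup.of 0)⁻¹,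
   FreeGroup.of 0 * FreeGroup.of 2 * (FreeGroup.of 0)⁻¹ * (FreeGroup.of 1)⁻¹,
   FreeGroup.of 5 * FreeGroup.of 3 * (FreeGroup.of 5)⁻¹ * (FreeGroup.of 2)⁻¹,
   FreeGroup.of 7 * FreeGroup.of 3 * (FreeGroup.of 7)⁻¹ * (FreeGroup.of 4)⁻¹,
   FreeGroup.of 8 * FreeGroup.of 5 * (FreeGroup.of 8)⁻¹ * (FreeGroup.of 4)⁻¹,
   FreeGroup.of 9 * FreeGroup.of 5 * (FreeGroup.of 9)⁻¹ * (FreeGroup.of 6)⁻¹,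
   FreeGroup.of 1 * FreeGroup.of 7 * (FreeGroup.of 1)⁻¹ * (FreeGroup.of 6)⁻¹,
   FreeGroup.of 10 * FreeGroup.of 8 * (FreeGroup.of 10)⁻¹ * (FreeGroup.of 7)⁻¹,
   FreeGroup.of 2 * FreeGroup.of 8 * (FreeGroup.of 2)⁻¹ * (FreeGroup.of 9)⁻¹,
   FreeGroup.of 3 * FreeGroup.of 10 * (FreeGroup.of 3)⁻¹ * (FreeGroup.of 9)⁻¹}

/-- The knot group of `11a_239`, as a presented group. -/
abbrev SourceGroup : Type := PresentedGroup sourceRels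

/-- The prescribed images of the generators `x₁, …, x₁₁`. -/
def f : Fin 11 → TargetGroup :=
  ![y 0,
   y 5,
   y 4,
   y 4,
   (y 0)⁻¹ * y 2 * y 4,
   y 4,
   y 3,
   y 2,
   y 2,
   y 1,
   y 2]

end Stmt19

namespace Stmt19

theorem rel₁ : y 2 * y 1 = y 0 * y 2 := by
  have h : y 2 * y 1 * (y 2)⁻¹ * (y 0)⁻¹ = 1 :=
    PresentedGroup.one_of_mem (rels := targetRels) (by simp [targetRels])
  exact mul_inv_eq_iff_eq_mul.mp (mul_inv_eq_one.mp h)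

theorem rel₂ : y 4 * y 2 = y 1 * y 4 := by
  have h : y 4 * y 2 * (y 4)⁻¹ * (y 1)⁻¹ = 1 :=
    PresentedGroup.one_of_mem (rels := targetRels) (by simp [targetRels])
  exact mul_inv_eq_iff_eq_mul.mp (mul_inv_eq_one.mp h)

theorem rel₃ : y 5 * y 2 = y 3 * y 5 := by
  have h : y 5 * y 2 * (y 5)⁻¹ * (y 3)⁻¹ = 1 :=
    PresentedGroup.one_of_mem (rels := targetRels) (by simp [targetRels])
  exact mul_inv_eq_iff_eq_mul.mp (mul_inv_eq_one.mp h)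

theorem rel₄ : y 1 * y 4 = y 3 * y 1 := by
  have h : y 1 * y 4 * (y 1)⁻¹ * (y 3)⁻¹ = 1 :=
    PresentedGroup.one_of_mem (rels := targetRels) (by simp [targetRels])
  exact mul_inv_eq_iff_eq_mul.mp (mul_inv_eq_one.mp h)

theorem rel₅ : y 0 * y 4 = y 5 * y 0 := by
  have h : y 0 * y 4 * (y 0)⁻¹ * (y 5)⁻¹ = 1 :=
    PresentedGroup.one_of_mem (rels := targetRels) (by simp [targetRels])
  exact mul_inv_eq_iff_eq_mul.mp (mul_inv_eq_one.mp h)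

/-- The sixth Wirtinger relation of the diagram of `6₃`, a consequence of the other five. -/
theorem redundant : y 3 * y 5 = y 0 * y 3 := by
  apply mul_right_cancel (b := y 1)
  calc y 3 * y 5 * y 1 = y 5 * (y 2 * y 1) := by rw [← rel₃, mul_assoc]
    _ = y 0 * y 4 * y 2 := by rw [rel₁, ← mul_assoc, ← rel₅]
    _ = y 0 * y 3 * y 1 := by rw [mul_assoc, rel₂, rel₄, mul_assoc]

/-- The relation needed for the two source relators involving `x₅`. -/
theorem rel_x₅ : y 2 * y 4 = (y 0)⁻¹ * y 2 * y 4 * y 2 := by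
  rw [mul_assoc, rel₂, mul_assoc, ← mul_assoc (y 2), rel₁]
  group

theorem lift_f_eq_one : ∀ r ∈ sourceRels, FreeGroup.lift f r = 1 := by
  have key {a b d : TargetGroup} (h : a * b = d * a) : a * b * a⁻¹ * d⁻¹ = 1 :=
    mul_inv_eq_one.mpr (mul_inv_eq_iff_eq_mul.mpr h)
  intro r hr
  simp only [sourceRels, Set.mem_insert_iff, Set.mem_singleton_iff] at hr
  rcases hr with rfl | rfl | rfl | rfl | rfl | rfl | rfl | rfl | rfl | rfl <;>
    simp only [map_mul, map_inv, FreeGroup.lift_apply_of]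
  · exact key redundant
  · exact key rel₅
  · exact key (a := y 4) (b := y 4) rfl
  · exact key rel_x₅
  · exact key rel_x₅
  · exact key rel₄
  · exact key rel₃
  · exact key (a := y 2) (b := y 2) rfl
  · exact key rel₂
  · exact key rel₂

end Stmt19

open Stmt19 in
theorem stmt19 :
    (∀ r ∈ sourceRels, FreeGroup.lift f r = 1) ∧
    ∃ φ : SourceGroup →* TargetGroup,
      (∀ j : Fin 11, φ (PresentedGroup.of j) = f j) ∧ Function.Surjective φ := by
  refine ⟨lift_f_eq_one, PresentedGroup.toGroup lift_f_eq_one,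
    fun j => PresentedGroup.toGroup.of lift_f_eq_one, ?_⟩
  rw [← MonoidHom.range_eq_top, eq_top_iff, ← PresentedGroup.closure_range_of,
    Subgroup.closure_le]
  rintro _ ⟨i, rfl⟩
  -- preimages of `y₁, …, y₆` are `x₁, x₁₀, x₈, x₇, x₃, x₂`
  refine ⟨PresentedGroup.of (![0, 9, 7, 6, 2, 1] i), ?_⟩
  rw [PresentedGroup.toGroup.of]
  fin_cases i <;> rfl
end
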